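/- arXiv:2502.03267 — 2 statements merged into one kernel-verified Lean document; each statement's English description precedes it below -/
import Mathlib

section
/- Let n ≥ 1, let Ω be any subset of ℝⁿ, and let δ ∈ (0, n]. Then for every sequence (f_i)_{i≥1} of functions f_i : Ω → [0, ∞] (no measurability assumed), the Choquet integral is countably sublinear: ∫_Ω Σ_{i=1}^∞ f_i dH̃^δ_∞ ≤ Σ_{i=1}^∞ ∫_Ω f_i dH̃^δ_∞. -/
open MeasureTheory Set Metric Filter Topology
open scoped ENNReal

noncomputable section

/-- Euclidean space `ℝⁿ`. -/
abbrev En (n : ℕ) : Type := EuclideanSpace ℝ (Fin n)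

/-- The half-open dyadic cube `2^k (m + [0,1)ⁿ)`, `k : ℤ`, `m : ℤⁿ`. -/
def dyadicCube (n : ℕ) (k : ℤ) (m : Fin n → ℤ) : Set (En n) :=
  {x | ∀ i, (m i : ℝ) * 2 ^ k ≤ x i ∧ x i < ((m i : ℝ) + 1) * 2 ^ k}

/-- The `δ`-dimensional dyadic Hausdorff content `H̃^δ_∞`: the infimum of `Σ ℓ(Q_i)^δ`
over all countable collections of dyadic cubes whose union's interior covers `E`. -/
def dyadicContent (n : ℕ) (δ : ℝ) (E : Set (En n)) : ℝ≥0∞ :=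
  ⨅ (c : ℕ → ℤ × (Fin n → ℤ))
    (_ : E ⊆ interior (⋃ i, dyadicCube n (c i).1 (c i).2)),
    ∑' i, ENNReal.ofReal (((2 : ℝ) ^ (c i).1) ^ δ)

/-- The Choquet integral `∫_Ω f dH̃^δ_∞ := ∫_0^∞ H̃^δ_∞({x ∈ Ω : f x > t}) dt`
of a `[0,∞]`-valued function over `Ω ⊆ ℝⁿ`. -/
def choquetIntegral (n : ℕ) (δ : ℝ) (Ω : Set (En n)) (f : En n → ℝ≥0∞) : ℝ≥0∞ :=
  ∫⁻ t in Ioi (0 : ℝ), dyadicContent n δ {x | x ∈ Ω ∧ ENNReal.ofReal t < f x}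

/-- The Choquet integral `∫_Ω |f| dH̃^δ_∞` of a real-valued function. -/
def choquetIntegralAbs (n : ℕ) (δ : ℝ) (Ω : Set (En n)) (f : En n → ℝ) : ℝ≥0∞ :=
  choquetIntegral n δ Ω (fun x => ENNReal.ofReal |f x|)

/-- The Choquet integral `∫_Ω |f| dH̃^δ_∞` of an extended-real-valued function. -/
def choquetIntegralEAbs (n : ℕ) (δ : ℝ) (Ω : Set (En n)) (f : En n → EReal) : ℝ≥0∞ :=
  choquetIntegral n δ Ω (fun x => (f x).abs)

/-- The ball average `f^δ_{B(x,r)} := (1/H̃^δ_∞(B(x,r))) ∫_{B(x,r)} f dH̃^δ_∞`. -/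
def ballAvg (n : ℕ) (δ : ℝ) (f : En n → ℝ≥0∞) (x : En n) (r : ℝ) : ℝ≥0∞ :=
  choquetIntegral n δ (ball x r) f / dyadicContent n δ (ball x r)

/-- The Hausdorff-content centred maximal function `M^δ f(x)`. -/
def maximal (n : ℕ) (δ : ℝ) (f : En n → ℝ≥0∞) (x : En n) : ℝ≥0∞ :=
  ⨆ (r : ℝ) (_ : 0 < r), ballAvg n δ f x r

/-- `f^δ_*(x) := limsup_{r→0⁺} (1/H̃^δ_∞(B(x,r))) ∫_{B(x,r)} |f(y) − f(x)| dH̃^δ_∞(y)`. -/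
def lebDev (n : ℕ) (δ : ℝ) (f : En n → ℝ) (x : En n) : ℝ≥0∞ :=
  limsup (fun r : ℝ => choquetIntegralAbs n δ (ball x r) (fun y => f y - f x) /
    dyadicContent n δ (ball x r)) (𝓝[>] (0 : ℝ))

/-- `limsup_{r→0⁺} f^δ_{B(x,r)}` of the ball averages. -/
def limsupAvg (n : ℕ) (δ : ℝ) (f : En n → ℝ≥0∞) (x : En n) : ℝ≥0∞ :=
  limsup (fun r : ℝ => ballAvg n δ f x r) (𝓝[>] (0 : ℝ))

/-!
The Choquet integral of `f` over `Ω` is the infimum of the costs `Σ_Q w_Q ℓ(Q)^δ` over the weights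
`w` on the dyadic cubes for which `Σ_Q w_Q 1_Q` dominates a lower semicontinuous function that is at
least `f` on `Ω`. Costs and weighted sums are both additive in `w`, so this infimum is countably
sublinear.

No weights beat the integral because dyadic cubes are nested: stack the weights of the cubes
containing `x`, larger cubes first. The cube `Q` then occupies an interval of heights of length
`w_Q` which is the same for all `x ∈ Q`, and the cubes whose interval contains `t` cover the set
where `Σ_Q w_Q 1_Q > t`. Integrating the cost of these covers in `t` gives `Σ_Q w_Q ℓ(Q)^δ`.
Conversely, near-optimal covers of the level sets `{f > r ^ k}`, with weights `r ^ (k + 1) - r ^ k`,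
come within a factor `r` of the integral, and `r → 1`.
-/

lemma exists_one_lt_ofReal_mul_le {y ε : ℝ≥0∞} (hy : y ≠ ∞) (hε : ε ≠ 0) :
    ∃ r : ℝ, 1 < r ∧ ENNReal.ofReal r * y ≤ y + ε := by
  have hlim : Tendsto (fun r ↦ ENNReal.ofReal r * y) (𝓝[>] 1) (𝓝 y) := by
    have hcont := ENNReal.continuous_ofReal.tendsto 1
    simpa using ENNReal.Tendsto.mul_const (b := y) (hcont.mono_left nhdsWithin_le_nhds)
      (Or.inr hy)
  have hle := hlim.eventually_le_const (ENNReal.lt_add_right hy hε)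
  exact (eventually_mem_nhdsWithin.and hle).exists

lemma exists_tsum_Ioi_le {a : ℤ → ℝ≥0∞} {l : ℤ} (hfin : ∑' j : Ioi l, a j ≠ ∞)
    {t : ℝ≥0∞} (ht : 0 < t) : ∃ k : ℤ, ∑' j : Ioi k, a j ≤ t := by
  rw [tsum_subtype] at hfin
  obtain ⟨s, hs⟩ := ((ENNReal.tendsto_tsum_compl_atTop_zero hfin).eventually_le_const ht).exists
  obtain ⟨m, hm⟩ := s.bddAbove
  refine ⟨max l m, le_trans ?_ hs⟩
  calc ∑' j : Ioi (max l m), a j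
      = ∑' j : Ioi (max l m), (Ioi l).indicator a j :=
        tsum_congr fun j ↦ (indicator_of_mem ((le_max_left l m).trans_lt j.2) a).symm
    _ ≤ ∑' j : {j // j ∉ s}, (Ioi l).indicator a j :=
        ENNReal.tsum_mono_subtype _ fun j hj hjs ↦
          ((hm hjs).trans (le_max_right l m)).not_gt hj

lemma exists_lt_tsum_Ioi {a : ℤ → ℝ≥0∞} {t : ℝ≥0∞} (hta : t < ∑' j, a j) :
    ∃ k : ℤ, t < ∑' j : Ioi k, a j := by
  rw [ENNReal.tsum_eq_iSup_sum] at hta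
  obtain ⟨s, hs⟩ := lt_iSup_iff.1 hta
  obtain ⟨m, hm⟩ := s.bddBelow
  refine ⟨m - 1, hs.trans_le ?_⟩
  rw [← Finset.tsum_subtype]
  exact ENNReal.tsum_mono_subtype a fun j hj ↦ (sub_one_lt m).trans_le (hm hj)

lemma tsum_Ioi_sub_one (a : ℤ → ℝ≥0∞) (k : ℤ) :
    ∑' j : Ioi (k - 1), a j = ∑' j : Ioi k, a j + a k := by
  have hsplit : Ioi (k - 1) = Ioi k ∪ {k} := by
    rw [Ioi_union_left]; ext; simp
  rw [hsplit, ENNReal.summable.tsum_union_disjoint (by simp) ENNReal.summable, tsum_singleton k a]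

lemma exists_mem_Ico_tsum_Ioi {a : ℤ → ℝ≥0∞} {l : ℤ} (hfin : ∑' j : Ioi l, a j ≠ ∞)
    {t : ℝ≥0∞} (ht : 0 < t) (hta : t < ∑' j, a j) :
    ∃ k : ℤ, t ∈ Ico (∑' j : Ioi k, a j) (∑' j : Ioi k, a j + a k) := by
  obtain ⟨m, hm⟩ := exists_lt_tsum_Ioi hta
  have hbdd (k : ℤ) (hk : ∑' j : Ioi k, a j ≤ t) : m ≤ k := by
    by_contra! hkm
    exact (hm.trans_le (ENNReal.tsum_mono_subtype a (Ioi_subset_Ioi hkm.le))).not_ge hk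
  obtain ⟨k, hk, hmin⟩ := Int.exists_least_of_bdd ⟨m, hbdd⟩ (exists_tsum_Ioi_le hfin ht)
  refine ⟨k, hk, ?_⟩
  rw [← tsum_Ioi_sub_one]
  exact not_le.1 fun h ↦ (sub_one_lt k).not_ge (hmin _ h)

lemma volume_restrict_Ioi_preimage_ofReal_Ico (a b : ℝ≥0∞) :
    volume.restrict (Ioi (0 : ℝ)) (ENNReal.ofReal ⁻¹' Ico a b) = b - a := by
  rw [Measure.restrict_apply (measurableSet_Ico.preimage ENNReal.measurable_ofReal)]
  rcases eq_or_ne a ∞ with rfl | ha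
  · simp
  rcases eq_or_ne b ∞ with rfl | hb
  · rw [ENNReal.top_sub ha]
    refine top_unique (Real.volume_Ioi.ge.trans (measure_mono fun t (ht : a.toReal < t) ↦ ?_))
    have ht0 : 0 < t := ENNReal.toReal_nonneg.trans_lt ht
    exact ⟨⟨(ENNReal.le_ofReal_iff_toReal_le ha ht0.le).2 ht.le, ENNReal.ofReal_lt_top⟩, ht0⟩
  have hset : ENNReal.ofReal ⁻¹' Ico a b ∩ Ioi 0 = Ico a.toReal b.toReal ∩ Ioi 0 := by
    ext t
    refine and_congr_left fun (ht : 0 < t) ↦ and_congr ?_ ?_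
    · exact ENNReal.le_ofReal_iff_toReal_le ha ht.le
    · exact ENNReal.ofReal_lt_iff_lt_toReal ht.le hb
  have hae : (Ico a.toReal b.toReal ∩ Ioi 0 : Set ℝ) =ᵐ[volume]
      (Ico a.toReal b.toReal ∩ Ici 0 : Set ℝ) :=
    ae_eq_set_inter EventuallyEq.rfl Ioi_ae_eq_Ici
  have hsub : Ico a.toReal b.toReal ⊆ Ici 0 := fun t ht ↦ ENNReal.toReal_nonneg.trans ht.1
  rw [hset, measure_congr hae, inter_eq_left.2 hsub,
    Real.volume_Ico, ENNReal.ofReal_sub _ ENNReal.toReal_nonneg, ENNReal.ofReal_toReal ha,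
    ENNReal.ofReal_toReal hb]

lemma lintegral_Ioi_eq_tsum_Ioc_zpow {r : ℝ} (hr : 1 < r) (φ : ℝ → ℝ≥0∞) :
    ∫⁻ t in Ioi 0, φ t = ∑' k : ℤ, ∫⁻ t in Ioc (r ^ k) (r ^ (k + 1)), φ t := by
  have hunion : ⋃ k : ℤ, Ioc (r ^ k) (r ^ (k + 1)) = Ioi 0 := by
    ext t
    simp only [mem_iUnion, mem_Ioi]
    exact ⟨fun ⟨k, hk, _⟩ ↦ (zpow_pos (zero_lt_one.trans hr) k).trans hk,
      fun ht ↦ exists_mem_Ioc_zpow ht hr⟩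
  have hdisj : Pairwise (Function.onFun Disjoint fun k : ℤ ↦ Ioc (r ^ k) (r ^ (k + 1))) :=
    (zpow_right_mono₀ hr.le).pairwise_disjoint_on_Ioc_succ
  rw [← hunion, lintegral_iUnion (fun _ ↦ measurableSet_Ioc) hdisj]

lemma lintegral_Ioi_le_tsum_zpow {r : ℝ} (hr : 1 < r) {φ : ℝ → ℝ≥0∞} (hφ : Antitone φ) :
    ∫⁻ t in Ioi 0, φ t ≤ ∑' k : ℤ, ENNReal.ofReal (r ^ (k + 1) - r ^ k) * φ (r ^ k) := by
  rw [lintegral_Ioi_eq_tsum_Ioc_zpow hr]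
  refine ENNReal.tsum_le_tsum fun k ↦ ?_
  calc ∫⁻ t in Ioc (r ^ k) (r ^ (k + 1)), φ t
      ≤ ∫⁻ _ in Ioc (r ^ k) (r ^ (k + 1)), φ (r ^ k) :=
        setLIntegral_mono' measurableSet_Ioc fun t ht ↦ hφ ht.1.le
    _ = ENNReal.ofReal (r ^ (k + 1) - r ^ k) * φ (r ^ k) := by simp [mul_comm]

lemma tsum_zpow_le_mul_lintegral_Ioi {r : ℝ} (hr : 1 < r) {φ : ℝ → ℝ≥0∞} (hφ : Antitone φ) :
    ∑' k : ℤ, ENNReal.ofReal (r ^ (k + 1) - r ^ k) * φ (r ^ k) ≤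
      ENNReal.ofReal r * ∫⁻ t in Ioi 0, φ t := by
  have hr0 : 0 < r := zero_lt_one.trans hr
  rw [lintegral_Ioi_eq_tsum_Ioc_zpow hr, ← ENNReal.tsum_mul_left,
    ← (Equiv.addRight (1 : ℤ)).tsum_eq]
  refine ENNReal.tsum_le_tsum fun k ↦ ?_
  have hstep : r ^ (k + 1 + 1) - r ^ (k + 1) = r * (r ^ (k + 1) - r ^ k) := by
    rw [zpow_add_one₀ hr0.ne' (k + 1), zpow_add_one₀ hr0.ne' k]; ring
  calc ENNReal.ofReal (r ^ (k + 1 + 1) - r ^ (k + 1)) * φ (r ^ (k + 1))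
      = ENNReal.ofReal r * ∫⁻ _ in Ioc (r ^ k) (r ^ (k + 1)), φ (r ^ (k + 1)) := by
        rw [hstep, ENNReal.ofReal_mul hr0.le, mul_assoc]; simp [mul_comm]
    _ ≤ ENNReal.ofReal r * ∫⁻ t in Ioc (r ^ k) (r ^ (k + 1)), φ t := by
        gcongr ENNReal.ofReal r * ?_
        exact setLIntegral_mono' measurableSet_Ioc fun t ht ↦ hφ ht.2

lemma le_tsum_indicator_zpow {r : ℝ} (hr : 1 < r) (y : ℝ≥0∞) :
    y ≤ ∑' k : ℤ, {k : ℤ | ENNReal.ofReal (r ^ k) < y}.indicator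
      (fun k ↦ ENNReal.ofReal (r ^ (k + 1) - r ^ k)) k := by
  have hanti : Antitone ((ENNReal.ofReal ⁻¹' Iio y).indicator (1 : ℝ → ℝ≥0∞)) := by
    intro s t hst
    by_cases ht : ENNReal.ofReal t < y
    · simp [ht, (ENNReal.ofReal_le_ofReal hst).trans_lt ht]
    · simp [ht]
  calc y = ∫⁻ t in Ioi 0, (ENNReal.ofReal ⁻¹' Iio y).indicator 1 t := by
        rw [lintegral_indicator_one (measurableSet_Iio.preimage ENNReal.measurable_ofReal),
          ← Ico_bot, volume_restrict_Ioi_preimage_ofReal_Ico, bot_eq_zero, tsub_zero]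
    _ ≤ _ := (lintegral_Ioi_le_tsum_zpow hr hanti).trans_eq <| tsum_congr fun k ↦ by
        simp [indicator]

section DyadicCubes

variable {n : ℕ}

/-- The label `(k, m)` of the dyadic cube `2^k (m + [0,1)ⁿ)`. -/
abbrev DyadicLabel (n : ℕ) : Type := ℤ × (Fin n → ℤ)

/-- The label of the dyadic cube of side length `2^k` containing `x`. -/
def dyadicLabel (x : En n) (k : ℤ) : DyadicLabel n := (k, fun i ↦ ⌊x i / 2 ^ k⌋)

lemma dyadicLabel_injective (x : En n) : Function.Injective (dyadicLabel x) :=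
  fun _ _ h ↦ congrArg Prod.fst h

lemma mem_dyadicCube_iff {x : En n} {q : DyadicLabel n} :
    x ∈ dyadicCube n q.1 q.2 ↔ dyadicLabel x q.1 = q := by
  have hpos : (0 : ℝ) < 2 ^ q.1 := by positivity
  simp only [dyadicCube, mem_ofPred_eq, dyadicLabel, Prod.ext_iff, true_and, funext_iff,
    Int.floor_eq_iff, le_div_iff₀ hpos, div_lt_iff₀ hpos]

lemma mem_dyadicCube_dyadicLabel (x : En n) (k : ℤ) :
    x ∈ dyadicCube n (dyadicLabel x k).1 (dyadicLabel x k).2 :=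
  mem_dyadicCube_iff.2 rfl

lemma dyadicLabel_eq_of_le {x y : En n} {k j : ℤ} (hkj : k ≤ j)
    (h : dyadicLabel x k = dyadicLabel y k) : dyadicLabel x j = dyadicLabel y j := by
  obtain ⟨d, rfl⟩ := Int.le.dest hkj
  have hfloor (z : En n) (i : Fin n) :
      ⌊z i / 2 ^ (k + d)⌋ = ⌊z i / 2 ^ k⌋ / ((2 ^ d : ℕ) : ℤ) := by
    rw [← Int.floor_div_natCast, div_div, zpow_add₀ two_ne_zero]
    simp
  have hk (i : Fin n) : ⌊x i / 2 ^ k⌋ = ⌊y i / 2 ^ k⌋ := congrFun (congrArg Prod.snd h) i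
  simp only [dyadicLabel, hfloor, hk]

/-- The vertex `2^k m` of the cube labelled by `(k, m)`, used as a sample point of the cube. -/
def dyadicCorner (q : DyadicLabel n) : En n := WithLp.toLp 2 fun i ↦ (q.2 i : ℝ) * 2 ^ q.1

lemma dyadicLabel_dyadicCorner (q : DyadicLabel n) : dyadicLabel (dyadicCorner q) q.1 = q := by
  refine Prod.ext rfl (funext fun i ↦ ?_)
  have hne : (2 : ℝ) ^ q.1 ≠ 0 := by positivity
  simp [dyadicLabel, dyadicCorner, mul_div_cancel_right₀ _ hne]

/-- The summand `ℓ(Q)^δ` of the Hausdorff content, `Q` being the cube labelled by `q`. -/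
def cubeCost (δ : ℝ) (q : DyadicLabel n) : ℝ≥0∞ := ENNReal.ofReal (((2 : ℝ) ^ q.1) ^ δ)

lemma one_le_cubeCost {δ : ℝ} (hδ : 0 ≤ δ) {q : DyadicLabel n} (hq : 0 ≤ q.1) :
    1 ≤ cubeCost δ q :=
  ENNReal.one_le_ofReal.2 (Real.one_le_rpow (one_le_zpow₀ one_le_two hq) hδ)

lemma exists_cubeCost_le {δ : ℝ} (hδ : 0 < δ) {ε : ℝ≥0∞} (hε : 0 < ε) :
    ∃ q : DyadicLabel n, cubeCost δ q ≤ ε := by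
  have hpow : Tendsto (fun k : ℕ ↦ ((2 : ℝ) ^ (-k : ℤ)) ^ δ) atTop (𝓝 0) := by
    have hhalf : Tendsto (fun k : ℕ ↦ (2 : ℝ) ^ (-k : ℤ)) atTop (𝓝 0) := by
      simpa [Function.comp_def] using
        tendsto_inv_atTop_zero.comp (tendsto_pow_atTop_atTop_of_one_lt one_lt_two)
    simpa [Real.zero_rpow hδ.ne'] using hhalf.rpow_const (p := δ) (Or.inr hδ.le)
  have hcost : Tendsto (fun k : ℕ ↦ cubeCost δ ((-k, 0) : DyadicLabel n)) atTop (𝓝 0) := by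
    simpa [cubeCost] using ENNReal.tendsto_ofReal hpow
  obtain ⟨k, hk⟩ := (hcost.eventually_le_const hε).exists
  exact ⟨_, hk⟩

end DyadicCubes

section DyadicContent

variable {n : ℕ} {δ : ℝ}

lemma dyadicContent_mono {E F : Set (En n)} (h : E ⊆ F) :
    dyadicContent n δ E ≤ dyadicContent n δ F :=
  le_iInf₂ fun c hc ↦ iInf₂_le c (h.trans hc)

lemma antitone_dyadicContent_lt (Ω : Set (En n)) (f : En n → ℝ≥0∞) :
    Antitone fun t : ℝ ↦ dyadicContent n δ {x | x ∈ Ω ∧ ENNReal.ofReal t < f x} :=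
  fun _ _ hst ↦ dyadicContent_mono fun _ hx ↦ ⟨hx.1, (ENNReal.ofReal_le_ofReal hst).trans_lt hx.2⟩

lemma dyadicContent_le_tsum (hδ : 0 < δ) {ι : Type*} [Countable ι] (q : ι → DyadicLabel n)
    {E : Set (En n)} (hE : E ⊆ interior (⋃ i, dyadicCube n (q i).1 (q i).2)) :
    dyadicContent n δ E ≤ ∑' i, cubeCost δ (q i) := by
  refine ENNReal.le_of_forall_pos_le_add fun ε hε _ ↦ ?_
  obtain ⟨ε', hε', hsum⟩ := ENNReal.exists_pos_sum_of_countable' (ENNReal.coe_ne_zero.2 hε.ne') ℕ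
  choose s hs using fun k ↦ exists_cubeCost_le (n := n) hδ (hε' k)
  obtain ⟨_⟩ := nonempty_denumerable (ι ⊕ ℕ)
  let e : ℕ ≃ ι ⊕ ℕ := (Denumerable.eqv (ι ⊕ ℕ)).symm
  have hcover : E ⊆ interior (⋃ k, dyadicCube n (Sum.elim q s (e k)).1 (Sum.elim q s (e k)).2) := by
    refine hE.trans (interior_mono (iUnion_subset fun i ↦ ?_))
    exact subset_iUnion_of_subset (e.symm (Sum.inl i)) (by simp)
  calc dyadicContent n δ E
      ≤ ∑' k, cubeCost δ (Sum.elim q s (e k)) := iInf₂_le (Sum.elim q s ∘ e) hcover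
    _ = ∑' i, cubeCost δ (q i) + ∑' k, cubeCost δ (s k) := by
        rw [e.tsum_eq fun i ↦ cubeCost δ (Sum.elim q s i),
          Summable.tsum_sum ENNReal.summable ENNReal.summable]
        rfl
    _ ≤ ∑' i, cubeCost δ (q i) + ε := by
        gcongr
        exact (ENNReal.tsum_le_tsum hs).trans hsum.le

end DyadicContent

section WeightedCovers

variable {n : ℕ} {δ : ℝ} {w : DyadicLabel n → ℝ≥0∞}

/-- The function `Σ_Q w_Q 1_Q` on `ℝⁿ` attached to weights `w_Q` on the dyadic cubes. -/
def weightSum (w : DyadicLabel n → ℝ≥0∞) (x : En n) : ℝ≥0∞ :=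
  ∑' q : DyadicLabel n, (dyadicCube n q.1 q.2).indicator (fun _ ↦ w q) x

/-- The cost `Σ_Q w_Q ℓ(Q)^δ` of weights `w_Q` on the dyadic cubes. -/
def weightCost (δ : ℝ) (w : DyadicLabel n → ℝ≥0∞) : ℝ≥0∞ := ∑' q, w q * cubeCost δ q

/-- The weights `w` cover `f` over `Ω`: the weighted sum of the cubes dominates, everywhere, a lower
semicontinuous function that dominates `f` on `Ω`. Semicontinuity plays the role that the interior
plays in the definition of the content. -/
def IsWeightedCover (Ω : Set (En n)) (f : En n → ℝ≥0∞) (w : DyadicLabel n → ℝ≥0∞) : Prop :=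
  ∃ h : En n → ℝ≥0∞, LowerSemicontinuous h ∧ (∀ x ∈ Ω, f x ≤ h x) ∧ ∀ x, h x ≤ weightSum w x

lemma weightSum_eq_tsum_dyadicLabel (w : DyadicLabel n → ℝ≥0∞) (x : En n) :
    weightSum w x = ∑' k, w (dyadicLabel x k) := by
  classical
  rw [weightSum, ENNReal.tsum_prod']
  refine tsum_congr fun k ↦ ?_
  rw [tsum_eq_single (dyadicLabel x k).2 fun m hm ↦ indicator_of_notMem
    (fun hx ↦ hm (congrArg Prod.snd (mem_dyadicCube_iff.1 hx)).symm) _]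
  exact indicator_of_mem (mem_dyadicCube_dyadicLabel x k) _

lemma weightSum_tsum {ι : Type*} (w : ι → DyadicLabel n → ℝ≥0∞) (x : En n) :
    weightSum (fun q ↦ ∑' i, w i q) x = ∑' i, weightSum (w i) x := by
  simp only [weightSum_eq_tsum_dyadicLabel]
  exact ENNReal.tsum_comm

lemma weightCost_tsum {ι : Type*} (w : ι → DyadicLabel n → ℝ≥0∞) :
    weightCost δ (fun q ↦ ∑' i, w i q) = ∑' i, weightCost δ (w i) := by
  simp only [weightCost, ← ENNReal.tsum_mul_right]
  exact ENNReal.tsum_comm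

lemma IsWeightedCover.tsum {ι : Type*} {Ω : Set (En n)} {f : ι → En n → ℝ≥0∞}
    {w : ι → DyadicLabel n → ℝ≥0∞} (hw : ∀ i, IsWeightedCover Ω (f i) (w i)) :
    IsWeightedCover Ω (fun x ↦ ∑' i, f i x) fun q ↦ ∑' i, w i q := by
  choose h hlsc hf hsum using hw
  refine ⟨fun x ↦ ∑' i, h i x, lowerSemicontinuous_tsum hlsc, ?_, fun x ↦ ?_⟩
  · exact fun x hx ↦ ENNReal.tsum_le_tsum fun i ↦ hf i x hx
  · exact (ENNReal.tsum_le_tsum fun i ↦ hsum i x).trans_eq (weightSum_tsum w x).symm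

lemma IsWeightedCover.indicator {E : Set (En n)} {f : En n → ℝ≥0∞} (hw : IsWeightedCover E f w)
    (Ω : Set (En n)) : IsWeightedCover Ω (E.indicator f) w := by
  obtain ⟨h, hlsc, hf, hsum⟩ := hw
  exact ⟨h, hlsc, fun x _ ↦ indicator_le' (hf ·) (fun _ _ ↦ zero_le) x, hsum⟩

lemma IsWeightedCover.mono {E Ω : Set (En n)} {f g : En n → ℝ≥0∞} (hw : IsWeightedCover Ω g w)
    (hE : E ⊆ Ω) (hfg : ∀ x ∈ E, f x ≤ g x) : IsWeightedCover E f w := by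
  obtain ⟨h, hlsc, hg, hsum⟩ := hw
  exact ⟨h, hlsc, fun x hx ↦ (hfg x hx).trans (hg x (hE hx)), hsum⟩

/-- The total weight of the dyadic cubes strictly larger than the cube labelled by `q` that
contain it. -/
def largerWeight (w : DyadicLabel n → ℝ≥0∞) (q : DyadicLabel n) : ℝ≥0∞ :=
  ∑' k : Ioi q.1, w (dyadicLabel (dyadicCorner q) k)

/-- The heights `t` occupied by the cube labelled by `q` when the weights of all the cubes are
stacked on top of each other, larger cubes first. -/
def heightInterval (w : DyadicLabel n → ℝ≥0∞) (q : DyadicLabel n) : Set ℝ :=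
  ENNReal.ofReal ⁻¹' Ico (largerWeight w q) (largerWeight w q + w q)

lemma largerWeight_dyadicLabel (w : DyadicLabel n → ℝ≥0∞) (x : En n) (k : ℤ) :
    largerWeight w (dyadicLabel x k) = ∑' j : Ioi k, w (dyadicLabel x j) :=
  tsum_congr fun j ↦ congrArg w
    (dyadicLabel_eq_of_le (le_of_lt j.2) (dyadicLabel_dyadicCorner (dyadicLabel x k)))

lemma measurableSet_heightInterval (w : DyadicLabel n → ℝ≥0∞) (q : DyadicLabel n) :
    MeasurableSet (heightInterval w q) :=
  measurableSet_Ico.preimage ENNReal.measurable_ofReal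

lemma tsum_Ioi_zero_dyadicLabel_le_weightCost (hδ : 0 ≤ δ) (w : DyadicLabel n → ℝ≥0∞) (x : En n) :
    ∑' k : Ioi (0 : ℤ), w (dyadicLabel x k) ≤ weightCost δ w :=
  calc ∑' k : Ioi (0 : ℤ), w (dyadicLabel x k)
      ≤ ∑' k : Ioi (0 : ℤ), w (dyadicLabel x k) * cubeCost δ (dyadicLabel x k) :=
        ENNReal.tsum_le_tsum fun k ↦ le_mul_of_one_le_right' (one_le_cubeCost hδ (le_of_lt k.2))
    _ ≤ weightCost δ w :=
        ENNReal.tsum_comp_le_tsum_of_injective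
          ((dyadicLabel_injective x).comp Subtype.val_injective) fun q ↦ w q * cubeCost δ q

lemma exists_mem_heightInterval (hδ : 0 ≤ δ) (hw : weightCost δ w ≠ ∞) {x : En n} {t : ℝ}
    (ht : 0 < t) (hx : ENNReal.ofReal t < weightSum w x) :
    ∃ k, t ∈ heightInterval w (dyadicLabel x k) := by
  rw [weightSum_eq_tsum_dyadicLabel] at hx
  have hfin := ne_top_of_le_ne_top hw (tsum_Ioi_zero_dyadicLabel_le_weightCost hδ w x)
  obtain ⟨k, hk⟩ := exists_mem_Ico_tsum_Ioi hfin (ENNReal.ofReal_pos.2 ht) hx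
  exact ⟨k, by rwa [heightInterval, largerWeight_dyadicLabel]⟩

lemma dyadicContent_le_tsum_heightInterval (hδ : 0 < δ) (hw : weightCost δ w ≠ ∞) {V : Set (En n)}
    (hV : IsOpen V) {t : ℝ} (ht : 0 < t) (hVt : ∀ x ∈ V, ENNReal.ofReal t < weightSum w x) :
    dyadicContent n δ V ≤ ∑' q, (heightInterval w q).indicator (fun _ ↦ cubeCost δ q) t := by
  let F : Set (DyadicLabel n) := {q | t ∈ heightInterval w q}
  have hcover : V ⊆ ⋃ q : F, dyadicCube n q.1.1 q.1.2 := fun x hx ↦ by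
    obtain ⟨k, hk⟩ := exists_mem_heightInterval hδ.le hw ht (hVt x hx)
    exact mem_iUnion.2 ⟨⟨dyadicLabel x k, hk⟩, mem_dyadicCube_dyadicLabel x k⟩
  calc dyadicContent n δ V ≤ ∑' q : F, cubeCost δ q.1 :=
        dyadicContent_le_tsum hδ _ (interior_maximal hcover hV)
    _ = ∑' q, (heightInterval w q).indicator (fun _ ↦ cubeCost δ q) t := tsum_subtype _ _

lemma lintegral_indicator_heightInterval_le (w : DyadicLabel n → ℝ≥0∞) (q : DyadicLabel n)
    (c : ℝ≥0∞) : ∫⁻ t in Ioi 0, (heightInterval w q).indicator (fun _ ↦ c) t ≤ w q * c := by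
  rw [lintegral_indicator_const (measurableSet_heightInterval w q), mul_comm, heightInterval,
    volume_restrict_Ioi_preimage_ofReal_Ico]
  gcongr
  exact add_tsub_le_left

lemma IsWeightedCover.choquetIntegral_le (hδ : 0 < δ) {Ω : Set (En n)} {f : En n → ℝ≥0∞}
    (hcov : IsWeightedCover Ω f w) : choquetIntegral n δ Ω f ≤ weightCost δ w := by
  obtain ⟨h, hlsc, hf, hsum⟩ := hcov
  rcases eq_or_ne (weightCost δ w) ∞ with hw | hw
  · exact hw ▸ le_top
  have hcontent (t : ℝ) (ht : t ∈ Ioi 0) :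
      dyadicContent n δ {x | x ∈ Ω ∧ ENNReal.ofReal t < f x} ≤
        ∑' q, (heightInterval w q).indicator (fun _ ↦ cubeCost δ q) t :=
    (dyadicContent_mono fun x hx ↦ hx.2.trans_le (hf x hx.1)).trans <|
      dyadicContent_le_tsum_heightInterval hδ hw (hlsc.isOpen_preimage (ENNReal.ofReal t)) ht
        fun x hx ↦ lt_of_lt_of_le hx (hsum x)
  calc choquetIntegral n δ Ω f
      ≤ ∫⁻ t in Ioi 0, ∑' q, (heightInterval w q).indicator (fun _ ↦ cubeCost δ q) t :=
        setLIntegral_mono' measurableSet_Ioi hcontent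
    _ = ∑' q, ∫⁻ t in Ioi 0, (heightInterval w q).indicator (fun _ ↦ cubeCost δ q) t :=
        lintegral_tsum fun q ↦
          (measurable_const.indicator (measurableSet_heightInterval w q)).aemeasurable
    _ ≤ weightCost δ w :=
        ENNReal.tsum_le_tsum fun q ↦ lintegral_indicator_heightInterval_le w q _

lemma isWeightedCover_indicator_range {ι : Type*} (c : ι → DyadicLabel n) (a : ℝ≥0∞) :
    IsWeightedCover (interior (⋃ i, dyadicCube n (c i).1 (c i).2)) (fun _ ↦ a)
      ((range c).indicator fun _ ↦ a) := by
  refine ⟨indicator _ fun _ ↦ a, isOpen_interior.lowerSemicontinuous_indicator zero_le,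
    fun x hx ↦ (indicator_of_mem hx fun _ ↦ a).ge, indicator_le fun x hx ↦ ?_⟩
  obtain ⟨i, hi⟩ := mem_iUnion.1 (interior_subset hx)
  calc a = (dyadicCube n (c i).1 (c i).2).indicator
        (fun _ ↦ (range c).indicator (fun _ ↦ a) (c i)) x := by simp [hi]
    _ ≤ weightSum ((range c).indicator fun _ ↦ a) x := ENNReal.le_tsum (c i)

lemma weightCost_indicator_range_le {ι : Type*} (c : ι → DyadicLabel n) (a : ℝ≥0∞) :
    weightCost δ ((range c).indicator fun _ ↦ a) ≤ a * ∑' i, cubeCost δ (c i) :=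
  calc weightCost δ ((range c).indicator fun _ ↦ a)
      = ∑' q : range c, a * cubeCost δ q.1 := by
        rw [tsum_subtype (range c) fun q ↦ a * cubeCost δ q]
        exact tsum_congr fun q ↦ (indicator_mul_left _ _ _).symm
    _ = a * ∑' q : range c, cubeCost δ (c (rangeSplitting c q)) := by
        simp only [ENNReal.tsum_mul_left, apply_rangeSplitting]
    _ ≤ a * ∑' i, cubeCost δ (c i) := by
        gcongr
        exact ENNReal.tsum_comp_le_tsum_of_injective (rangeSplitting_injective c)
          fun i ↦ cubeCost δ (c i)

lemma exists_isWeightedCover_const {E : Set (En n)} (hE : dyadicContent n δ E ≠ ∞)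
    {a ε : ℝ≥0∞} (ha : a ≠ ∞) (hε : ε ≠ 0) :
    ∃ w, IsWeightedCover E (fun _ ↦ a) w ∧ weightCost δ w ≤ a * dyadicContent n δ E + ε := by
  have hlt : dyadicContent n δ E < dyadicContent n δ E + ε / a :=
    ENNReal.lt_add_right hE (ENNReal.div_ne_zero.2 ⟨hε, ha⟩)
  obtain ⟨c, hc⟩ := iInf_lt_iff.1 hlt
  obtain ⟨hEc, hcost⟩ := iInf_lt_iff.1 hc
  refine ⟨(range c).indicator fun _ ↦ a,
    (isWeightedCover_indicator_range c a).mono hEc fun _ _ ↦ le_rfl, ?_⟩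
  calc weightCost δ ((range c).indicator fun _ ↦ a)
      ≤ a * ∑' i, cubeCost δ (c i) := weightCost_indicator_range_le c a
    _ ≤ a * (dyadicContent n δ E + ε / a) := by gcongr; exact hcost.le
    _ ≤ a * dyadicContent n δ E + ε := by
        rw [mul_add]
        gcongr
        exact ENNReal.mul_div_le

lemma exists_isWeightedCover_zpow {Ω : Set (En n)} {f : En n → ℝ≥0∞} {r : ℝ} (hr : 1 < r)
    (hf : choquetIntegral n δ Ω f ≠ ∞) {ε : ℝ≥0∞} (hε : ε ≠ 0) :
    ∃ w, IsWeightedCover Ω f w ∧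
      weightCost δ w ≤ ENNReal.ofReal r * choquetIntegral n δ Ω f + ε := by
  let a (k : ℤ) : ℝ≥0∞ := ENNReal.ofReal (r ^ (k + 1) - r ^ k)
  let E (k : ℤ) : Set (En n) := {x | x ∈ Ω ∧ ENNReal.ofReal (r ^ k) < f x}
  have hriemann : ∑' k, a k * dyadicContent n δ (E k) ≤
      ENNReal.ofReal r * choquetIntegral n δ Ω f :=
    tsum_zpow_le_mul_lintegral_Ioi hr (antitone_dyadicContent_lt Ω f)
  have ha (k : ℤ) : a k ≠ 0 :=
    (ENNReal.ofReal_pos.2 (sub_pos.2 (zpow_lt_zpow_right₀ hr (lt_add_one k)))).ne'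
  have hE (k : ℤ) : dyadicContent n δ (E k) ≠ ∞ := fun htop ↦
    ENNReal.ne_top_of_tsum_ne_top (ne_top_of_le_ne_top (ENNReal.mul_ne_top ENNReal.ofReal_ne_top hf)
      hriemann) k (by rw [htop, ENNReal.mul_top (ha k)])
  obtain ⟨ε', hε', hsum⟩ := ENNReal.exists_pos_sum_of_countable' hε ℤ
  choose w hcov hcost using fun k ↦
    exists_isWeightedCover_const (hE k) (a := a k) ENNReal.ofReal_ne_top (hε' k).ne'
  refine ⟨fun q ↦ ∑' k, w k q, ?_, ?_⟩
  · refine (IsWeightedCover.tsum fun k ↦ (hcov k).indicator Ω).mono subset_rfl fun x hx ↦ ?_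
    refine (le_tsum_indicator_zpow hr (f x)).trans_eq (tsum_congr fun k ↦ ?_)
    simp [indicator, E, hx, a]
  · calc weightCost δ (fun q ↦ ∑' k, w k q)
        = ∑' k, weightCost δ (w k) := weightCost_tsum w
      _ ≤ ∑' k, (a k * dyadicContent n δ (E k) + ε' k) := ENNReal.tsum_le_tsum hcost
      _ ≤ ENNReal.ofReal r * choquetIntegral n δ Ω f + ε := by
          rw [ENNReal.tsum_add]
          gcongr

lemma exists_isWeightedCover {Ω : Set (En n)} {f : En n → ℝ≥0∞}
    (hf : choquetIntegral n δ Ω f ≠ ∞) {ε : ℝ≥0∞} (hε : ε ≠ 0) :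
    ∃ w, IsWeightedCover Ω f w ∧ weightCost δ w ≤ choquetIntegral n δ Ω f + ε := by
  obtain ⟨r, hr, hrf⟩ := exists_one_lt_ofReal_mul_le hf (ENNReal.half_pos hε).ne'
  obtain ⟨w, hcov, hcost⟩ := exists_isWeightedCover_zpow hr hf (ENNReal.half_pos hε).ne'
  refine ⟨w, hcov, hcost.trans ?_⟩
  calc ENNReal.ofReal r * choquetIntegral n δ Ω f + ε / 2
      ≤ choquetIntegral n δ Ω f + ε / 2 + ε / 2 := by gcongr
    _ = choquetIntegral n δ Ω f + ε := by rw [add_assoc, ENNReal.add_halves]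

end WeightedCovers

theorem choquet_countably_sublinear_general {ι : Type*} [Countable ι] (n : ℕ) (Ω : Set (En n))
    {δ : ℝ} (hδ : 0 < δ) (f : ι → En n → ℝ≥0∞) :
    choquetIntegral n δ Ω (fun x ↦ ∑' i, f i x) ≤ ∑' i, choquetIntegral n δ Ω (f i) := by
  refine ENNReal.le_of_forall_pos_le_add fun ε hε hfin ↦ ?_
  obtain ⟨ε', hε', hsum⟩ := ENNReal.exists_pos_sum_of_countable' (ENNReal.coe_ne_zero.2 hε.ne') ι
  choose w hcov hcost using fun i ↦
    exists_isWeightedCover (ENNReal.ne_top_of_tsum_ne_top hfin.ne i) (hε' i).ne'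
  calc choquetIntegral n δ Ω (fun x ↦ ∑' i, f i x)
      ≤ weightCost δ (fun q ↦ ∑' i, w i q) := (IsWeightedCover.tsum hcov).choquetIntegral_le hδ
    _ = ∑' i, weightCost δ (w i) := weightCost_tsum w
    _ ≤ ∑' i, (choquetIntegral n δ Ω (f i) + ε' i) := ENNReal.tsum_le_tsum hcost
    _ ≤ ∑' i, choquetIntegral n δ Ω (f i) + ε := by
        rw [ENNReal.tsum_add]
        gcongr

/-- countable sublinearity of the Choquet integral with respect to
the dyadic Hausdorff content, for arbitrary (not necessarily measurable)
nonnegative functions. -/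
theorem choquet_countably_sublinear (n : ℕ) (hn : 1 ≤ n) (Ω : Set (En n))
    (δ : ℝ) (hδ0 : 0 < δ) (hδn : δ ≤ n) (f : ℕ → En n → ℝ≥0∞) :
    choquetIntegral n δ Ω (fun x => ∑' i, f i x) ≤
      ∑' i, choquetIntegral n δ Ω (f i) :=
  choquet_countably_sublinear_general n Ω hδ0 f
end
end

section
/- Let n ≥ 1 and δ ∈ (0, n]. There exists a constant c > 0 depending only on δ and n such that for every f ∈ nL¹(ℝⁿ, H̃^δ_∞) and every λ > 0, H̃^δ_∞({x ∈ ℝⁿ : f^δ_*(x) > λ}) ≤ (c/λ) ∫_{ℝⁿ} |f| dH̃^δ_∞. -/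
open MeasureTheory Set Metric Filter Topology
open scoped ENNReal

noncomputable section

/-!
Pointwise `f^δ_* ≤ M^δ|f| + |f|`, so the estimate follows from Chebyshev's inequality and the weak
type of `M^δ`. The superlevel set of `M^δ f` is covered by the triples of the dyadic cubes on which
`f` has a large average; since `δ ≤ n`, Lebesgue measure restricted to a cube is a Frostman measure,
so that up to constants the content of a cube, and of a ball of comparable size, is `ℓ(Q)^δ`.

The content is not additive on disjoint cubes, so the maximal cubes with large average cannot
simply be summed. Instead one keeps a subfamily `S` which is maximal subject to the packing
condition `∑_{Q ∈ S, Q ⊆ P} ℓ(Q)^δ ≤ 2 ℓ(P)^δ` for all dyadic `P` (Melnikov, Orobitg–Verdera).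
Packing gives `∑_{Q ∈ S} H(E ∩ Q) ≤ C H(E)`, an inequality between outer measures that need only
be tested on dyadic cubes `E`; it then passes to Choquet integrals and bounds `∑_{Q ∈ S} ℓ(Q)^δ`.
By maximality every discarded cube lies in some `P` with `∑_{Q ∈ S, Q ⊆ P} ℓ(Q)^δ ≥ ℓ(P)^δ`, and the
maximal such `P` have total weight at most `∑_{Q ∈ S} ℓ(Q)^δ`.
-/

section Sums

variable {α : Type*}

lemma tsum_sUnion_le_of_directedOn (f : α → ℝ≥0∞) {c : Set (Set α)} (hne : c.Nonempty)
    (hdir : DirectedOn (· ⊆ ·) c) {A : ℝ≥0∞} (h : ∀ s ∈ c, ∑' x : s, f x ≤ A) :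
    ∑' x : ⋃₀ c, f x ≤ A := by
  rw [ENNReal.tsum_eq_iSup_sum]
  refine iSup_le fun t => ?_
  obtain ⟨s, hs, hts⟩ := hdir.exists_mem_subset_of_finite_of_subset_sUnion hne
    (s := (t.map (Function.Embedding.subtype _) : Finset α)) (Finset.finite_toSet _)
    t.map_subtype_subset
  calc ∑ x ∈ t, f x = ∑' x : (t.map (Function.Embedding.subtype _) : Finset α), f x := by
        simp only [Finset.tsum_subtype, Finset.sum_map, Function.Embedding.subtype_apply]
    _ ≤ ∑' x : s, f x := ENNReal.tsum_mono_subtype f hts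
    _ ≤ A := h s hs

lemma tsum_indicator_const_le_of_subsingleton {s t : Set α} (h : (s ∩ t).Subsingleton)
    (w : ℝ≥0∞) : ∑' x : s, t.indicator (fun _ => w) (x : α) ≤ w := by
  rw [tsum_subtype, indicator_indicator, ← tsum_subtype]
  rcases h.eq_empty_or_singleton with h | ⟨x, h⟩ <;> simp [h]

end Sums

section Choquet

variable {α : Type*}

/-- The Choquet integral `∫ f dμ` with respect to an outer measure `μ`. The Choquet integral over a
set `Ω` is encoded as `choquet (OuterMeasure.restrict Ω μ) f`. -/
def choquet (μ : OuterMeasure α) (f : α → ℝ≥0∞) : ℝ≥0∞ :=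
  ∫⁻ t in Ioi (0 : ℝ), μ {x | ENNReal.ofReal t < f x}

lemma antitone_measure_superlevel (μ : OuterMeasure α) (f : α → ℝ≥0∞) :
    Antitone fun t : ℝ => μ {x | ENNReal.ofReal t < f x} :=
  fun _ _ hst => measure_mono fun _ hx => (ENNReal.ofReal_le_ofReal hst).trans_lt hx

lemma choquet_mono_outerMeasure {μ ν : OuterMeasure α} (h : μ ≤ ν) (f : α → ℝ≥0∞) :
    choquet μ f ≤ choquet ν f :=
  lintegral_mono fun _ => h _

lemma choquet_restrict_mono (μ : OuterMeasure α) (f : α → ℝ≥0∞) {s t : Set α} (h : s ⊆ t) :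
    choquet (OuterMeasure.restrict s μ) f ≤ choquet (OuterMeasure.restrict t μ) f :=
  choquet_mono_outerMeasure (OuterMeasure.restrict_mono h le_rfl) f

lemma choquet_smul (c : ℝ≥0∞) (μ : OuterMeasure α) (f : α → ℝ≥0∞) :
    choquet (c • μ) f = c * choquet μ f :=
  lintegral_const_mul c (antitone_measure_superlevel μ f).measurable

lemma choquet_sum {ι : Type*} [Countable ι] (μ : ι → OuterMeasure α) (f : α → ℝ≥0∞) :
    choquet (OuterMeasure.sum μ) f = ∑' i, choquet (μ i) f :=
  lintegral_tsum fun i => (antitone_measure_superlevel (μ i) f).measurable.aemeasurable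

lemma choquet_restrict_iUnion_le {ι : Type*} [Countable ι] (μ : OuterMeasure α) (f : α → ℝ≥0∞)
    (s : ι → Set α) :
    choquet (OuterMeasure.restrict (⋃ i, s i) μ) f ≤
      ∑' i, choquet (OuterMeasure.restrict (s i) μ) f := by
  rw [← choquet_sum]
  refine choquet_mono_outerMeasure (fun E => ?_) f
  simpa only [OuterMeasure.sum_apply, OuterMeasure.restrict_apply, inter_iUnion] using
    measure_iUnion_le fun i => E ∩ s i

lemma mul_measure_superlevel_le_choquet (μ : OuterMeasure α) (f : α → ℝ≥0∞) (s : ℝ) :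
    ENNReal.ofReal s * μ {x | ENNReal.ofReal s < f x} ≤ choquet μ f :=
  calc ENNReal.ofReal s * μ {x | ENNReal.ofReal s < f x}
      = ∫⁻ _ in Ioc (0 : ℝ) s, μ {x | ENNReal.ofReal s < f x} := by
        rw [setLIntegral_const, Real.volume_Ioc, sub_zero, mul_comm]
    _ ≤ ∫⁻ t in Ioc (0 : ℝ) s, μ {x | ENNReal.ofReal t < f x} :=
        setLIntegral_mono' measurableSet_Ioc fun _ ht => antitone_measure_superlevel μ f ht.2
    _ ≤ choquet μ f := lintegral_mono_set Ioc_subset_Ioi_self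

lemma choquet_le_add_mul_measure_univ (μ : OuterMeasure α) {f g : α → ℝ≥0∞} {a : ℝ} (ha : 0 ≤ a)
    (h : ∀ x, f x ≤ g x + ENNReal.ofReal a) :
    choquet μ f ≤ choquet μ g + ENNReal.ofReal a * μ univ := by
  have superlevel_subset {t : ℝ} (ht : a < t) :
      {x | ENNReal.ofReal t < f x} ⊆ {x | ENNReal.ofReal (t - a) < g x} := fun x hx => by
    have hlt : ENNReal.ofReal (t - a) + ENNReal.ofReal a < g x + ENNReal.ofReal a := by
      rw [← ENNReal.ofReal_add (sub_nonneg.2 ht.le) ha, sub_add_cancel]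
      exact lt_of_lt_of_le hx (h x)
    exact lt_of_add_lt_add_right hlt
  have tail_le : ∫⁻ t in Ioi a, μ {x | ENNReal.ofReal t < f x} ≤ choquet μ g :=
    calc ∫⁻ t in Ioi a, μ {x | ENNReal.ofReal t < f x}
        ≤ ∫⁻ t in Ioi a, μ {x | ENNReal.ofReal (t - a) < g x} :=
          setLIntegral_mono' measurableSet_Ioi fun _ ht => measure_mono (superlevel_subset ht)
      _ = choquet μ g := by
          have hpre : (fun t : ℝ => t - a) ⁻¹' Ioi 0 = Ioi a := by ext; simp
          rw [← hpre]
          exact (measurePreserving_sub_right volume a).setLIntegral_comp_preimage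
            measurableSet_Ioi (antitone_measure_superlevel μ g).measurable
  calc choquet μ f
      = ∫⁻ t in Ioc 0 a ∪ Ioi a, μ {x | ENNReal.ofReal t < f x} := by
        rw [Ioc_union_Ioi_eq_Ioi ha, choquet]
    _ ≤ (∫⁻ t in Ioc 0 a, μ {x | ENNReal.ofReal t < f x}) +
          ∫⁻ t in Ioi a, μ {x | ENNReal.ofReal t < f x} := lintegral_union_le _ _ _
    _ ≤ (∫⁻ _ in Ioc 0 a, μ univ) + choquet μ g :=
        add_le_add (lintegral_mono fun _ => measure_mono (subset_univ _)) tail_le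
    _ = choquet μ g + ENNReal.ofReal a * μ univ := by
        rw [setLIntegral_const, Real.volume_Ioc, sub_zero, mul_comm, add_comm]

end Choquet

/-- The index `(k, m)` of the dyadic cube `2^k (m + [0,1)ⁿ)`. Indices rather than sets are used
since for `n = 0` all cubes coincide as sets. -/
@[ext]
structure DyadicCube (n : ℕ) where
  scale : ℤ
  corner : Fin n → ℤ

namespace DyadicCube

variable {n : ℕ} {Q P P' : DyadicCube n} {k : ℤ} {x y : En n}

instance : Countable (DyadicCube n) :=
  Function.Injective.countable (f := fun Q : DyadicCube n => (Q.scale, Q.corner))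
    fun _ _ h => DyadicCube.ext (congrArg Prod.fst h) (congrArg Prod.snd h)

/-- The point set of a dyadic cube. -/
def toSet (Q : DyadicCube n) : Set (En n) := dyadicCube n Q.scale Q.corner

/-- The dyadic cube of side length `2 ^ k` that contains `x`. -/
def containing (k : ℤ) (x : En n) : DyadicCube n := ⟨k, fun i => ⌊x i / 2 ^ k⌋⟩

lemma mem_toSet_iff : x ∈ Q.toSet ↔ containing Q.scale x = Q := by
  have hpos : (0 : ℝ) < 2 ^ Q.scale := by positivity
  simp only [toSet, dyadicCube, mem_ofPred_eq, containing, DyadicCube.ext_iff, true_and,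
    funext_iff, Int.floor_eq_iff, le_div_iff₀ hpos, div_lt_iff₀ hpos]

lemma mem_containing (k : ℤ) (x : En n) : x ∈ (containing k x).toSet := mem_toSet_iff.2 rfl

lemma toSet_nonempty (Q : DyadicCube n) : Q.toSet.Nonempty := by
  refine ⟨WithLp.toLp 2 fun i => Q.corner i * 2 ^ Q.scale, fun i => ⟨le_rfl, ?_⟩⟩
  exact mul_lt_mul_of_pos_right (lt_add_one _) (by positivity)

/-- The dyadic cube of side length `2 ^ j * ℓ(Q)` that contains `Q`. -/
def ancestor (j : ℕ) (Q : DyadicCube n) : DyadicCube n :=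
  ⟨Q.scale + j, fun i => Q.corner i / 2 ^ j⟩

lemma ancestor_zero (Q : DyadicCube n) : ancestor 0 Q = Q := by simp [ancestor]

lemma ancestor_ancestor (i j : ℕ) (Q : DyadicCube n) :
    ancestor i (ancestor j Q) = ancestor (j + i) Q := by
  ext
  · simp [ancestor, add_assoc]
  · simp [ancestor, pow_add, Int.ediv_ediv]

lemma ancestor_containing (j : ℕ) (k : ℤ) (x : En n) :
    ancestor j (containing k x) = containing (k + j) x := by
  ext i
  · rfl
  · have hdiv : x i / 2 ^ (k + j) = x i / 2 ^ k / (2 ^ j : ℕ) := by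
      rw [zpow_add₀ two_ne_zero, zpow_natCast, div_mul_eq_div_div, Nat.cast_pow, Nat.cast_ofNat]
    simp only [ancestor, containing]
    rw [hdiv, Int.floor_div_natCast, Nat.cast_pow, Nat.cast_ofNat]

/-- `Q ≤ P` means that `P` is an ancestor of `Q`, which is stronger than inclusion of the point sets
only when `n = 0`. -/
instance : PartialOrder (DyadicCube n) where
  le Q P := ∃ j, ancestor j Q = P
  le_refl Q := ⟨0, ancestor_zero Q⟩
  le_trans := by
    rintro Q _ _ ⟨j, rfl⟩ ⟨i, rfl⟩
    exact ⟨j + i, (ancestor_ancestor i j Q).symm⟩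
  le_antisymm := by
    rintro Q _ ⟨j, rfl⟩ ⟨i, h⟩
    have hj : j = 0 := by
      have hscale := congrArg scale h
      simp only [ancestor] at hscale
      omega
    rw [hj, ancestor_zero]

lemma scale_le_scale (h : Q ≤ P) : Q.scale ≤ P.scale := by
  obtain ⟨j, rfl⟩ := h
  simp [ancestor]

lemma eq_of_le_of_scale_le (h : Q ≤ P) (hscale : P.scale ≤ Q.scale) : Q = P := by
  obtain ⟨j, rfl⟩ := h
  have hj : j = 0 := by
    simp only [ancestor] at hscale
    omega
  rw [hj, ancestor_zero]

lemma le_of_mem_of_mem (hscale : Q.scale ≤ P.scale) (hQ : x ∈ Q.toSet) (hP : x ∈ P.toSet) :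
    Q ≤ P := by
  obtain ⟨j, hj⟩ := Int.le.dest hscale
  refine ⟨j, ?_⟩
  rw [← mem_toSet_iff.1 hQ, ancestor_containing, hj, mem_toSet_iff.1 hP]

lemma toSet_subset (h : Q ≤ P) : Q.toSet ⊆ P.toSet := by
  obtain ⟨j, rfl⟩ := h
  intro x hx
  rw [← mem_toSet_iff.1 hx, ancestor_containing]
  exact mem_containing _ x

lemma le_or_le_of_mem (hQ : x ∈ Q.toSet) (hP : x ∈ P.toSet) : Q ≤ P ∨ P ≤ Q :=
  (le_total Q.scale P.scale).imp (le_of_mem_of_mem · hQ hP) (le_of_mem_of_mem · hP hQ)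

lemma le_or_le_of_le_of_le (hP : Q ≤ P) (hP' : Q ≤ P') : P ≤ P' ∨ P' ≤ P :=
  have ⟨_, hx⟩ := Q.toSet_nonempty
  le_or_le_of_mem (toSet_subset hP hx) (toSet_subset hP' hx)

lemma disjoint_or_le_or_le (Q P : DyadicCube n) :
    Disjoint Q.toSet P.toSet ∨ Q ≤ P ∨ P ≤ Q := by
  rw [or_iff_not_imp_left, not_disjoint_iff]
  rintro ⟨x, hQ, hP⟩
  exact le_or_le_of_mem hQ hP

lemma exists_le_maximal {F : Set (DyadicCube n)} {K : ℤ} (hF : ∀ Q ∈ F, Q.scale ≤ K) (hQ : Q ∈ F) :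
    ∃ P, Q ≤ P ∧ Maximal (· ∈ F) P := by
  obtain ⟨_, ⟨P, hP, hQP, rfl⟩, hmax⟩ := Int.exists_greatest_of_bdd
    (P := fun k => ∃ P ∈ F, Q ≤ P ∧ P.scale = k)
    ⟨K, by rintro _ ⟨P, hP, -, rfl⟩; exact hF P hP⟩ ⟨Q.scale, Q, hQ, le_rfl, rfl⟩
  refine ⟨P, hQP, hP, fun P' hP' hle => ?_⟩
  exact (eq_of_le_of_scale_le hle (hmax _ ⟨P', hP', hQP.trans hle, rfl⟩)).ge

lemma mk_injective (k : ℤ) : Function.Injective (mk k : (Fin n → ℤ) → DyadicCube n) :=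
  fun _ _ h => congrArg corner h

/-- The `3 ^ n` dyadic cubes of the same size as `Q` that touch `Q`, including `Q` itself. -/
def neighbors (Q : DyadicCube n) : Finset (DyadicCube n) :=
  (Fintype.piFinset fun i => Finset.Icc (Q.corner i - 1) (Q.corner i + 1)).map
    ⟨mk Q.scale, mk_injective Q.scale⟩

lemma card_neighbors (Q : DyadicCube n) : Q.neighbors.card = 3 ^ n := by
  have hcard (m : ℤ) : (m + 1 + 1 - (m - 1)).toNat = 3 := by omega
  simp [neighbors, hcard]

lemma mem_neighbors : P ∈ Q.neighbors ↔
    P.scale = Q.scale ∧ ∀ i, |P.corner i - Q.corner i| ≤ 1 := by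
  simp only [neighbors, Finset.mem_map, Fintype.mem_piFinset, Finset.mem_Icc,
    Function.Embedding.coeFn_mk]
  constructor
  · rintro ⟨m, hm, rfl⟩
    refine ⟨rfl, fun i => abs_le.2 ?_⟩
    have := hm i
    constructor <;> linarith
  · rintro ⟨hscale, h⟩
    refine ⟨P.corner, fun i => ?_, DyadicCube.ext hscale.symm rfl⟩
    have := abs_le.1 (h i)
    omega

lemma mem_neighbors_comm : P ∈ Q.neighbors ↔ Q ∈ P.neighbors := by
  simp only [mem_neighbors, eq_comm (a := P.scale), abs_sub_comm (P.corner _)]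

lemma ancestor_mem_neighbors (j : ℕ) (h : P ∈ Q.neighbors) :
    ancestor j P ∈ (ancestor j Q).neighbors := by
  rw [mem_neighbors] at h ⊢
  refine ⟨by simp [ancestor, h.1], fun i => ?_⟩
  have ediv_le {a b : ℤ} (hab : a ≤ b + 1) : a / 2 ^ j ≤ b / 2 ^ j + 1 := by
    have hpow : (1 : ℤ) ≤ 2 ^ j := one_le_pow₀ one_le_two
    calc a / 2 ^ j ≤ (b + 1 * 2 ^ j) / 2 ^ j := Int.ediv_le_ediv (by positivity) (by linarith)
      _ = b / 2 ^ j + 1 := Int.add_mul_ediv_right _ _ (by positivity)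
  have hi := abs_le.1 (h.2 i)
  simp only [ancestor]
  exact abs_le.2 ⟨by linarith [ediv_le (show Q.corner i ≤ P.corner i + 1 by linarith)],
    by linarith [ediv_le (show P.corner i ≤ Q.corner i + 1 by linarith)]⟩

lemma containing_mem_neighbors (h : ∀ i, |y i - x i| ≤ 2 ^ k) :
    containing k y ∈ (containing k x).neighbors := by
  have floor_le {a b : ℝ} (hab : |a - b| ≤ 2 ^ k) : ⌊a / 2 ^ k⌋ ≤ ⌊b / 2 ^ k⌋ + 1 := by
    have hpos : (0 : ℝ) < 2 ^ k := by positivity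
    rw [← Int.floor_add_one]
    refine Int.floor_mono ?_
    rw [div_add_one hpos.ne', div_le_div_iff_of_pos_right hpos]
    linarith [le_abs_self (a - b)]
  refine mem_neighbors.2 ⟨rfl, fun i => ?_⟩
  have hle := floor_le (h i)
  have hge := floor_le (abs_sub_comm (y i) (x i) ▸ h i)
  simp only [containing]
  exact abs_le.2 ⟨by linarith, by linarith⟩

/-- The concentric dilate `3Q`, as a union of dyadic cubes. -/
def triple (Q : DyadicCube n) : Set (En n) := ⋃ P : Q.neighbors, P.1.toSet

lemma mem_triple_iff : x ∈ Q.triple ↔ containing Q.scale x ∈ Q.neighbors := by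
  simp only [triple, mem_iUnion, Subtype.exists, exists_prop]
  constructor
  · rintro ⟨P, hP, hx⟩
    rwa [← (mem_neighbors.1 hP).1, mem_toSet_iff.1 hx]
  · exact fun h => ⟨_, h, mem_containing _ x⟩

lemma triple_subset_triple (h : Q ≤ P) : Q.triple ⊆ P.triple := by
  obtain ⟨j, rfl⟩ := h
  intro x hx
  rw [mem_triple_iff] at hx ⊢
  exact ancestor_containing j Q.scale x ▸ ancestor_mem_neighbors j hx

lemma ball_subset_triple {r : ℝ} (hr : r ≤ 2 ^ k) : ball x r ⊆ (containing k x).triple := by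
  intro y hy
  refine mem_triple_iff.2 (containing_mem_neighbors fun i => ?_)
  calc |y i - x i| ≤ ‖y - x‖ := PiLp.norm_apply_le (y - x) i
    _ ≤ 2 ^ k := (mem_ball_iff_norm.1 hy).le.trans hr

lemma toSet_subset_interior_triple (Q : DyadicCube n) : Q.toSet ⊆ interior Q.triple := by
  intro x hx
  rw [mem_interior_iff_mem_nhds]
  refine mem_of_superset (ball_mem_nhds x (by positivity : (0 : ℝ) < 2 ^ Q.scale)) ?_
  simpa only [mem_toSet_iff.1 hx] using ball_subset_triple (x := x) (le_refl (2 ^ Q.scale))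

lemma norm_sub_le_of_mem (hx : x ∈ Q.toSet) (hy : y ∈ Q.toSet) :
    ‖y - x‖ ≤ n * 2 ^ Q.scale := by
  have coord_le (i : Fin n) : |y i - x i| ≤ 2 ^ Q.scale :=
    abs_le.2 ⟨by linarith [hx i, hy i], by linarith [hx i, hy i]⟩
  refine le_of_sq_le_sq ?_ (by positivity)
  calc ‖y - x‖ ^ 2 = ∑ i, |y i - x i| ^ 2 := EuclideanSpace.norm_sq_eq _
    _ ≤ ∑ _i : Fin n, ((2 : ℝ) ^ Q.scale) ^ 2 := by gcongr with i; exact coord_le i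
    _ = n * ((2 : ℝ) ^ Q.scale) ^ 2 := by simp
    _ ≤ (n * 2 ^ Q.scale) ^ 2 := by
        rw [mul_pow]
        gcongr
        exact_mod_cast Nat.le_self_pow two_ne_zero n

lemma containing_subset_ball {r : ℝ} (hr : 2 ^ k < r) :
    (containing (k - n) x).toSet ⊆ ball x r := by
  intro y hy
  rw [mem_ball_iff_norm]
  calc ‖y - x‖ ≤ n * 2 ^ (k - n) := norm_sub_le_of_mem (mem_containing _ x) hy
    _ ≤ 2 ^ n * 2 ^ (k - n) := by gcongr; exact_mod_cast Nat.lt_two_pow_self.le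
    _ = 2 ^ k := by rw [← zpow_natCast, ← zpow_add₀ two_ne_zero, add_sub_cancel]
    _ < r := hr

variable {δ : ℝ}

/-- The summand `ℓ(Q) ^ δ` of the dyadic Hausdorff content. -/
def weight (δ : ℝ) (Q : DyadicCube n) : ℝ≥0∞ := ENNReal.ofReal (((2 : ℝ) ^ Q.scale) ^ δ)

lemma weight_eq_rpow (δ : ℝ) (Q : DyadicCube n) : weight δ Q = 2 ^ ((Q.scale : ℝ) * δ) := by
  rw [weight, ← Real.rpow_intCast, ← Real.rpow_mul zero_le_two,
    ← ENNReal.ofReal_rpow_of_pos zero_lt_two, ENNReal.ofReal_ofNat]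

lemma weight_mono (hδ : 0 < δ) (h : Q.scale ≤ P.scale) : weight δ Q ≤ weight δ P := by
  rw [weight_eq_rpow, weight_eq_rpow]
  gcongr
  exact one_le_two

lemma weight_congr (δ : ℝ) (h : Q.scale = P.scale) : weight δ Q = weight δ P := by
  rw [weight, weight, h]

lemma exists_weight_le (n : ℕ) (hδ : 0 < δ) {ε : ℝ≥0∞} (hε : ε ≠ 0) :
    ∃ Q : DyadicCube n, weight δ Q ≤ ε := by
  obtain ⟨N, hN⟩ := ENNReal.exists_inv_two_pow_lt hε
  refine ⟨⟨-⌈N / δ⌉, 0⟩, le_trans ?_ hN.le⟩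
  rw [weight_eq_rpow, ← ENNReal.rpow_natCast, ENNReal.inv_rpow, ← ENNReal.rpow_neg]
  refine ENNReal.rpow_le_rpow_of_exponent_le one_le_two ?_
  have hle : (N : ℝ) ≤ ⌈N / δ⌉ * δ := (div_le_iff₀ hδ).1 (Int.le_ceil _)
  push_cast
  linarith

lemma exists_scale_le_of_weight_le (n : ℕ) (hδ : 0 < δ) {A : ℝ≥0∞} (hA : A ≠ ⊤) :
    ∃ K : ℤ, ∀ Q : DyadicCube n, weight δ Q ≤ A → Q.scale ≤ K := by
  obtain ⟨N, hN⟩ := ENNReal.exists_nat_gt hA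
  refine ⟨⌈N / δ⌉, fun Q hQ => ?_⟩
  by_contra! hlt
  have hN' : (N : ℝ≥0∞) ≤ 2 ^ (N : ℝ) := by
    rw [ENNReal.rpow_natCast]
    exact_mod_cast Nat.lt_two_pow_self.le
  refine (hQ.trans_lt (hN.trans_le hN')).not_ge ?_
  rw [weight_eq_rpow]
  refine ENNReal.rpow_le_rpow_of_exponent_le one_le_two ((div_le_iff₀ hδ).1 ?_)
  exact (Int.le_ceil _).trans (by exact_mod_cast hlt.le)

lemma sum_neighbors_weight (δ : ℝ) (Q : DyadicCube n) :
    ∑' P : Q.neighbors, weight δ P.1 = 3 ^ n * weight δ Q := by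
  rw [Finset.tsum_subtype, Finset.sum_congr rfl fun P hP => weight_congr δ (mem_neighbors.1 hP).1,
    Finset.sum_const, card_neighbors, nsmul_eq_mul]
  norm_cast

lemma volume_toSet (Q : DyadicCube n) : volume Q.toSet = 2 ^ ((Q.scale : ℝ) * n) := by
  have hpre : Q.toSet = WithLp.ofLp ⁻¹' univ.pi fun i =>
      Ico ((Q.corner i : ℝ) * 2 ^ Q.scale) (((Q.corner i : ℝ) + 1) * 2 ^ Q.scale) := by
    ext
    simp [toSet, dyadicCube]
  have hside (m : ℤ) : ((m : ℝ) + 1) * 2 ^ Q.scale - m * 2 ^ Q.scale = 2 ^ Q.scale := by ring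
  rw [hpre, (PiLp.volume_preserving_ofLp (Fin n)).measure_preimage
    (MeasurableSet.univ_pi fun _ => measurableSet_Ico).nullMeasurableSet, Real.volume_pi_Ico,
    ← weight_eq_rpow, weight]
  simp [hside, ENNReal.ofReal_pow (zpow_nonneg zero_le_two Q.scale)]

end DyadicCube

open DyadicCube

section Content

variable {n : ℕ} {δ : ℝ} {Q P : DyadicCube n} {x : En n}

lemma exists_cover_of_dyadicContent_lt {E : Set (En n)} {a : ℝ≥0∞}
    (h : dyadicContent n δ E < a) :
    ∃ c : ℕ → DyadicCube n, E ⊆ interior (⋃ i, (c i).toSet) ∧ ∑' i, weight δ (c i) < a := by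
  simp only [dyadicContent, iInf_lt_iff] at h
  obtain ⟨c, hc, hlt⟩ := h
  exact ⟨fun i => ⟨(c i).1, (c i).2⟩, hc, hlt⟩

/-- The definition of the content only allows sequences of cubes; arbitrary countable families are
padded with cubes of small total weight. -/
lemma dyadicContent_le_tsum_weight {ι : Type*} [Countable ι] (hδ : 0 < δ) (Q : ι → DyadicCube n)
    {E : Set (En n)} (hE : E ⊆ interior (⋃ i, (Q i).toSet)) :
    dyadicContent n δ E ≤ ∑' i, weight δ (Q i) := by
  refine ENNReal.le_of_forall_pos_le_add fun ε hε _ => ?_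
  obtain ⟨η, hη, hsum⟩ :=
    ENNReal.exists_pos_sum_of_countable' (ENNReal.coe_ne_zero.2 hε.ne') ℕ
  choose R hR using fun i => exists_weight_le n hδ (hη i).ne'
  obtain ⟨e⟩ : Nonempty (ℕ ≃ ι ⊕ ℕ) := nonempty_equiv_of_countable
  have hcover : (⋃ i, (Q i).toSet) ⊆ ⋃ i, (Sum.elim Q R (e i)).toSet :=
    iUnion_subset fun i => subset_iUnion_of_subset (e.symm (.inl i)) (by simp)
  calc dyadicContent n δ E
      ≤ ∑' i, weight δ (Sum.elim Q R (e i)) :=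
        iInf₂_le (fun i => ((Sum.elim Q R (e i)).scale, (Sum.elim Q R (e i)).corner))
          (hE.trans (interior_mono hcover))
    _ = ∑' s, weight δ (Sum.elim Q R s) := e.tsum_eq fun s => weight δ (Sum.elim Q R s)
    _ = ∑' i, weight δ (Q i) + ∑' i, weight δ (R i) :=
        Summable.tsum_sum ENNReal.summable ENNReal.summable
    _ ≤ ∑' i, weight δ (Q i) + ε := by
        gcongr
        exact (ENNReal.tsum_le_tsum hR).trans hsum.le

/-- The dyadic Hausdorff content `H̃^δ_∞` as an outer measure. -/
def dyadicOuterMeasure (n : ℕ) (hδ : 0 < δ) : OuterMeasure (En n) where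
  measureOf := dyadicContent n δ
  empty := by
    simpa using dyadicContent_le_tsum_weight hδ (Empty.elim : Empty → DyadicCube n)
      (empty_subset _)
  mono h := le_iInf₂ fun c hc => iInf₂_le c (h.trans hc)
  iUnion_nat E _ := by
    refine ENNReal.le_of_forall_pos_le_add fun ε hε hfin => ?_
    obtain ⟨η, hη, hsum⟩ :=
      ENNReal.exists_pos_sum_of_countable' (ENNReal.coe_ne_zero.2 hε.ne') ℕ
    choose c hcover hc using fun i => exists_cover_of_dyadicContent_lt
      (ENNReal.lt_add_right (ENNReal.ne_top_of_tsum_ne_top hfin.ne i) (hη i).ne')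
    have hsub (i : ℕ) : E i ⊆ interior (⋃ p : ℕ × ℕ, (c p.1 p.2).toSet) :=
      (hcover i).trans <| interior_mono <| iUnion_subset fun j =>
        subset_iUnion (fun p : ℕ × ℕ => (c p.1 p.2).toSet) (i, j)
    calc dyadicContent n δ (⋃ i, E i)
        ≤ ∑' p : ℕ × ℕ, weight δ (c p.1 p.2) :=
          dyadicContent_le_tsum_weight hδ (fun p : ℕ × ℕ => c p.1 p.2) (iUnion_subset hsub)
      _ = ∑' i, ∑' j, weight δ (c i j) := ENNReal.tsum_prod (f := fun i j => weight δ (c i j))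
      _ ≤ ∑' i, (dyadicContent n δ (E i) + η i) := ENNReal.tsum_le_tsum fun i => (hc i).le
      _ ≤ ∑' i, dyadicContent n δ (E i) + ε := by
          rw [ENNReal.tsum_add]
          gcongr

lemma choquetIntegral_eq_choquet (hδ : 0 < δ) (Ω : Set (En n)) (f : En n → ℝ≥0∞) :
    choquetIntegral n δ Ω f = choquet (OuterMeasure.restrict Ω (dyadicOuterMeasure n hδ)) f := by
  simp only [choquet, OuterMeasure.restrict_apply, inter_comm _ Ω]
  rfl

/-- Among outer measures, inequalities against the content need only be tested on dyadic cubes. -/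
lemma le_dyadicOuterMeasure (hδ : 0 < δ) {μ : OuterMeasure (En n)}
    (h : ∀ Q : DyadicCube n, μ Q.toSet ≤ weight δ Q) : μ ≤ dyadicOuterMeasure n hδ := fun E => by
  refine le_of_forall_gt fun a ha => ?_
  obtain ⟨c, hcover, hlt⟩ := exists_cover_of_dyadicContent_lt ha
  calc μ E ≤ μ (⋃ i, (c i).toSet) := measure_mono (hcover.trans interior_subset)
    _ ≤ ∑' i, μ (c i).toSet := measure_iUnion_le _
    _ ≤ ∑' i, weight δ (c i) := ENNReal.tsum_le_tsum fun i => h (c i)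
    _ < a := hlt

lemma le_smul_dyadicOuterMeasure (hδ : 0 < δ) {μ : OuterMeasure (En n)} {C : ℝ≥0∞} (hC0 : C ≠ 0)
    (hC : C ≠ ⊤) (h : ∀ Q : DyadicCube n, μ Q.toSet ≤ C * weight δ Q) :
    μ ≤ C • dyadicOuterMeasure n hδ := fun E => by
  have hle : C⁻¹ • μ ≤ dyadicOuterMeasure n hδ :=
    le_dyadicOuterMeasure hδ fun Q => (ENNReal.inv_mul_le_iff hC0 hC).2 (h Q)
  exact (ENNReal.inv_mul_le_iff hC0 hC).1 (hle E)

lemma dyadicOuterMeasure_toSet_le (hδ : 0 < δ) (Q : DyadicCube n) :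
    dyadicOuterMeasure n hδ Q.toSet ≤ 3 ^ n * weight δ Q :=
  calc dyadicOuterMeasure n hδ Q.toSet
      ≤ ∑' P : Q.neighbors, weight δ P.1 := dyadicContent_le_tsum_weight hδ
        (fun P : Q.neighbors => P.1) Q.toSet_subset_interior_triple
    _ = 3 ^ n * weight δ Q := sum_neighbors_weight δ Q

lemma dyadicOuterMeasure_triple_le (hδ : 0 < δ) (Q : DyadicCube n) :
    dyadicOuterMeasure n hδ Q.triple ≤ 9 ^ n * weight δ Q :=
  calc dyadicOuterMeasure n hδ Q.triple
      ≤ ∑' P : Q.neighbors, dyadicOuterMeasure n hδ P.1.toSet := measure_iUnion_le _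
    _ ≤ ∑' P : Q.neighbors, 3 ^ n * weight δ P.1 :=
        ENNReal.tsum_le_tsum fun P => dyadicOuterMeasure_toSet_le hδ P.1
    _ = 9 ^ n * weight δ Q := by
        rw [ENNReal.tsum_mul_left, sum_neighbors_weight, ← mul_assoc, ← mul_pow]
        norm_num

/-- For `δ ≤ n` the suitably normalized Lebesgue measure on `Q` is a Frostman measure. -/
lemma weight_le_dyadicOuterMeasure_toSet (hδ : 0 < δ) (hδn : δ ≤ n) (Q : DyadicCube n) :
    weight δ Q ≤ dyadicOuterMeasure n hδ Q.toSet := by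
  set a : ℝ≥0∞ := 2 ^ ((Q.scale : ℝ) * (δ - n)) with ha
  set μ : OuterMeasure (En n) := a • OuterMeasure.restrict Q.toSet volume.toOuterMeasure with hμ
  have μ_apply (s : Set (En n)) : μ s = a * volume (s ∩ Q.toSet) := by
    rw [hμ, smul_apply, OuterMeasure.restrict_apply, smul_eq_mul,
      Measure.coe_toOuterMeasure]
  have mul_volume (P : DyadicCube n) :
      a * volume P.toSet = 2 ^ ((Q.scale : ℝ) * (δ - n) + P.scale * n) := by
    rw [ha, volume_toSet, ← ENNReal.rpow_add _ _ two_ne_zero ENNReal.ofNat_ne_top]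
  have mul_volume_self : a * volume Q.toSet = weight δ Q := by
    rw [mul_volume, weight_eq_rpow]
    ring_nf
  have frostman (P : DyadicCube n) : μ P.toSet ≤ weight δ P := by
    rw [μ_apply]
    rcases disjoint_or_le_or_le P Q with h | h | h
    · rw [h.inter_eq, measure_empty, mul_zero]
      exact zero_le
    · rw [inter_eq_left.2 (toSet_subset h), mul_volume, weight_eq_rpow]
      refine ENNReal.rpow_le_rpow_of_exponent_le one_le_two ?_
      have hscale : (P.scale : ℝ) ≤ Q.scale := by exact_mod_cast scale_le_scale h
      nlinarith
    · rw [inter_eq_right.2 (toSet_subset h), mul_volume_self]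
      exact weight_mono hδ (scale_le_scale h)
  calc weight δ Q = μ Q.toSet := by rw [μ_apply, inter_self, mul_volume_self]
    _ ≤ dyadicOuterMeasure n hδ Q.toSet := le_dyadicOuterMeasure hδ frostman Q.toSet

/-- The total weight of the cubes of `S` that are contained in `P`. -/
def massBelow (δ : ℝ) (S : Set (DyadicCube n)) (P : DyadicCube n) : ℝ≥0∞ :=
  ∑' Q : S, (Iic P).indicator (weight δ) Q

/-- The packing condition: below every cube `P`, the family `S` has mass at most `2 ℓ(P) ^ δ`. -/
def IsPacking (δ : ℝ) (S : Set (DyadicCube n)) : Prop := ∀ P, massBelow δ S P ≤ 2 * weight δ P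

lemma massBelow_le_tsum_weight (δ : ℝ) (S : Set (DyadicCube n)) (P : DyadicCube n) :
    massBelow δ S P ≤ ∑' Q : S, weight δ Q.1 :=
  ENNReal.tsum_le_tsum fun Q => indicator_le_self _ (weight δ) Q.1

lemma weight_le_massBelow {S : Set (DyadicCube n)} (hQ : Q ∈ S) (hle : Q ≤ P) :
    weight δ Q ≤ massBelow δ S P :=
  calc weight δ Q = (Iic P).indicator (weight δ) Q := (indicator_of_mem (mem_Iic.2 hle) _).symm
    _ ≤ massBelow δ S P := ENNReal.le_tsum (⟨Q, hQ⟩ : S)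

lemma massBelow_insert_le (δ : ℝ) (S : Set (DyadicCube n)) (Q P : DyadicCube n) :
    massBelow δ (insert Q S) P ≤ (Iic P).indicator (weight δ) Q + massBelow δ S P := by
  rw [massBelow, massBelow, insert_eq, ← tsum_singleton Q ((Iic P).indicator (weight δ))]
  exact ENNReal.tsum_union_le _ _ _

lemma IsPacking.sUnion {c : Set (Set (DyadicCube n))} (hne : c.Nonempty)
    (hc : IsChain (· ⊆ ·) c) (h : ∀ S ∈ c, IsPacking δ S) : IsPacking δ (⋃₀ c) := fun P =>
  tsum_sUnion_le_of_directedOn _ hne hc.directedOn fun S hS => h S hS P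

lemma IsPacking.insert {S : Set (DyadicCube n)} (hS : IsPacking δ S)
    (h : ∀ P, Q ≤ P → massBelow δ S P ≤ weight δ P) (hδ : 0 < δ) : IsPacking δ (insert Q S) := by
  intro P
  refine (massBelow_insert_le δ S Q P).trans ?_
  by_cases hle : Q ≤ P
  · rw [indicator_of_mem (mem_Iic.2 hle), two_mul]
    exact add_le_add (weight_mono hδ (scale_le_scale hle)) (h P hle)
  · rw [indicator_of_notMem (mt mem_Iic.1 hle), zero_add]
    exact hS P

/-- Take `S` maximal among the packing subfamilies: a cube is left out only if adding it would
violate the packing condition, which makes some ancestor heavy. -/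
lemma exists_isPacking_forall_exists_le_massBelow (hδ : 0 < δ) (F : Set (DyadicCube n)) :
    ∃ S ⊆ F, IsPacking δ S ∧ ∀ Q ∈ F, ∃ P, Q ≤ P ∧ weight δ P ≤ massBelow δ S P := by
  obtain ⟨S, -, ⟨hSF, hS⟩, hmax⟩ := zorn_subset_nonempty {S | S ⊆ F ∧ IsPacking δ S}
    (fun c hcF hc hne => ⟨⋃₀ c, ⟨sUnion_subset fun S hS => (hcF hS).1,
      .sUnion hne hc fun S hS => (hcF hS).2⟩, fun S => subset_sUnion_of_mem⟩) ∅
    ⟨empty_subset F, fun P => by simp [massBelow]⟩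
  refine ⟨S, hSF, hS, fun Q hQ => ?_⟩
  by_contra! light
  have hins : IsPacking δ (insert Q S) := hS.insert (fun P hP => (light P hP).le) hδ
  have hQS : Q ∈ S :=
    hmax ⟨insert_subset hQ hSF, hins⟩ (subset_insert Q S) (mem_insert Q S)
  exact (light Q le_rfl).not_ge (weight_le_massBelow hQS le_rfl)

lemma subsingleton_inter_Ici_of_isAntichain {A : Set (DyadicCube n)}
    (hA : IsAntichain (· ≤ ·) A) (Q : DyadicCube n) : (A ∩ Ici Q).Subsingleton := by
  rintro P ⟨hP, hQP⟩ P' ⟨hP', hQP'⟩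
  exact (le_or_le_of_le_of_le hQP hQP').elim (hA.eq hP hP') (hA.eq' hP hP')

lemma tsum_massBelow_le_of_isAntichain (δ : ℝ) (S : Set (DyadicCube n)) {A : Set (DyadicCube n)}
    (hA : IsAntichain (· ≤ ·) A) : ∑' P : A, massBelow δ S P ≤ ∑' Q : S, weight δ Q.1 :=
  calc ∑' P : A, massBelow δ S P
      = ∑' Q : S, ∑' P : A, (Ici Q.1).indicator (fun _ => weight δ Q.1) P.1 := by
        simp only [massBelow]
        exact ENNReal.tsum_comm
    _ ≤ ∑' Q : S, weight δ Q.1 := ENNReal.tsum_le_tsum fun Q =>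
        tsum_indicator_const_le_of_subsingleton (subsingleton_inter_Ici_of_isAntichain hA Q.1) _

/-- On a test cube, the pieces on smaller cubes add up by the packing condition, and at most one
cube of the antichain contains it. -/
lemma IsPacking.sum_restrict_le (hδ : 0 < δ) {S : Set (DyadicCube n)} (hS : IsPacking δ S)
    (hanti : IsAntichain (· ≤ ·) S) :
    OuterMeasure.sum (fun Q : S => OuterMeasure.restrict Q.1.toSet (dyadicOuterMeasure n hδ)) ≤
      (3 ^ (n + 1) : ℝ≥0∞) • dyadicOuterMeasure n hδ := by
  refine le_smul_dyadicOuterMeasure hδ (by positivity) (by finiteness) fun P => ?_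
  have piece_le (Q : DyadicCube n) : dyadicOuterMeasure n hδ (P.toSet ∩ Q.toSet) ≤
      3 ^ n * ((Iic P).indicator (weight δ) Q + (Ici P).indicator (fun _ => weight δ P) Q) := by
    rcases disjoint_or_le_or_le Q P with h | h | h
    · rw [h.symm.inter_eq, measure_empty]
      exact zero_le
    · refine (measure_mono inter_subset_right).trans ((dyadicOuterMeasure_toSet_le hδ Q).trans ?_)
      rw [indicator_of_mem (mem_Iic.2 h)]
      gcongr
      exact le_self_add
    · refine (measure_mono inter_subset_left).trans ((dyadicOuterMeasure_toSet_le hδ P).trans ?_)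
      rw [indicator_of_mem (mem_Ici.2 h)]
      gcongr
      exact le_add_self
  calc OuterMeasure.sum
        (fun Q : S => OuterMeasure.restrict Q.1.toSet (dyadicOuterMeasure n hδ)) P.toSet
      = ∑' Q : S, dyadicOuterMeasure n hδ (P.toSet ∩ Q.1.toSet) := by
        simp only [OuterMeasure.sum_apply, OuterMeasure.restrict_apply]
    _ ≤ ∑' Q : S, 3 ^ n * ((Iic P).indicator (weight δ) Q.1 +
          (Ici P).indicator (fun _ => weight δ P) Q.1) :=
        ENNReal.tsum_le_tsum fun Q => piece_le Q.1
    _ = 3 ^ n * (massBelow δ S P +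
          ∑' Q : S, (Ici P).indicator (fun _ => weight δ P) Q.1) := by
        rw [ENNReal.tsum_mul_left, ENNReal.tsum_add, massBelow]
    _ ≤ 3 ^ n * (2 * weight δ P + weight δ P) := by
        gcongr
        · exact hS P
        · exact tsum_indicator_const_le_of_subsingleton
            (subsingleton_inter_Ici_of_isAntichain hanti P) _
    _ = 3 ^ (n + 1) * weight δ P := by ring

lemma IsPacking.mul_tsum_weight_le (hδ : 0 < δ) {S : Set (DyadicCube n)} (hS : IsPacking δ S)
    (hanti : IsAntichain (· ≤ ·) S) {f : En n → ℝ≥0∞} {b : ℝ≥0∞}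
    (hb : ∀ Q ∈ S, b * weight δ Q ≤
      choquet (OuterMeasure.restrict Q.toSet (dyadicOuterMeasure n hδ)) f) :
    b * ∑' Q : S, weight δ Q.1 ≤ 3 ^ (n + 1) * choquet (dyadicOuterMeasure n hδ) f :=
  calc b * ∑' Q : S, weight δ Q.1
      = ∑' Q : S, b * weight δ Q.1 := ENNReal.tsum_mul_left.symm
    _ ≤ ∑' Q : S, choquet (OuterMeasure.restrict Q.1.toSet (dyadicOuterMeasure n hδ)) f :=
        ENNReal.tsum_le_tsum fun Q => hb Q.1 Q.2
    _ = choquet (OuterMeasure.sum fun Q : S =>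
          OuterMeasure.restrict Q.1.toSet (dyadicOuterMeasure n hδ)) f := (choquet_sum _ f).symm
    _ ≤ choquet ((3 ^ (n + 1) : ℝ≥0∞) • dyadicOuterMeasure n hδ) f :=
        choquet_mono_outerMeasure (hS.sum_restrict_le hδ hanti) f
    _ = 3 ^ (n + 1) * choquet (dyadicOuterMeasure n hδ) f := choquet_smul _ _ f

lemma iUnion_triple_subset_iUnion_triple {F G : Set (DyadicCube n)}
    (h : ∀ Q ∈ F, ∃ P ∈ G, Q ≤ P) : (⋃ Q : F, Q.1.triple) ⊆ ⋃ P : G, P.1.triple :=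
  iUnion_subset fun Q =>
    have ⟨P, hP, hle⟩ := h Q.1 Q.2
    subset_iUnion_of_subset ⟨P, hP⟩ (triple_subset_triple hle)

lemma dyadicOuterMeasure_iUnion_triple_heavy_le (hδ : 0 < δ) {S : Set (DyadicCube n)}
    (hS : ∑' Q : S, weight δ Q.1 ≠ ⊤) :
    dyadicOuterMeasure n hδ (⋃ P : {P | weight δ P ≤ massBelow δ S P}, P.1.triple) ≤
      9 ^ n * ∑' Q : S, weight δ Q.1 := by
  set G : Set (DyadicCube n) := {P | weight δ P ≤ massBelow δ S P}
  set A : Set (DyadicCube n) := {P | Maximal (· ∈ G) P}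
  obtain ⟨K, hK⟩ := exists_scale_le_of_weight_le n hδ hS
  have hcover : ∀ Q ∈ G, ∃ P ∈ A, Q ≤ P := fun Q hQ =>
    have ⟨P, hQP, hP⟩ := exists_le_maximal
      (fun P (hP : P ∈ G) => hK P (hP.trans (massBelow_le_tsum_weight δ S P))) hQ
    ⟨P, hP, hQP⟩
  calc dyadicOuterMeasure n hδ (⋃ P : G, P.1.triple)
      ≤ dyadicOuterMeasure n hδ (⋃ P : A, P.1.triple) :=
        measure_mono (iUnion_triple_subset_iUnion_triple hcover)
    _ ≤ ∑' P : A, dyadicOuterMeasure n hδ P.1.triple := measure_iUnion_le _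
    _ ≤ ∑' P : A, 9 ^ n * massBelow δ S P.1 := ENNReal.tsum_le_tsum fun P =>
        (dyadicOuterMeasure_triple_le hδ P.1).trans (by gcongr; exact P.2.prop)
    _ ≤ 9 ^ n * ∑' Q : S, weight δ Q.1 := by
        rw [ENNReal.tsum_mul_left]
        gcongr
        exact tsum_massBelow_le_of_isAntichain δ S (setOfPred_maximal_antichain _)

/-- The dyadic cubes on which `f` has average larger than `b`, with `ℓ(Q) ^ δ` in place of the
content of `Q`. -/
def largeAverage (hδ : 0 < δ) (f : En n → ℝ≥0∞) (b : ℝ≥0∞) : Set (DyadicCube n) :=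
  {Q | b * weight δ Q < choquet (OuterMeasure.restrict Q.toSet (dyadicOuterMeasure n hδ)) f}

lemma exists_scale_le_of_mem_largeAverage (hδ : 0 < δ) {f : En n → ℝ≥0∞}
    (hf : choquet (dyadicOuterMeasure n hδ) f ≠ ⊤) {b : ℝ≥0∞} (hb : b ≠ 0) :
    ∃ K : ℤ, ∀ Q ∈ largeAverage hδ f b, Q.scale ≤ K := by
  obtain ⟨K, hK⟩ := exists_scale_le_of_weight_le n hδ (ENNReal.div_ne_top hf hb)
  refine ⟨K, fun Q hQ => hK Q ?_⟩
  rw [ENNReal.le_div_iff_mul_le (.inl hb) (.inr hf), mul_comm]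
  exact hQ.le.trans (choquet_mono_outerMeasure (OuterMeasure.restrict_le_self _ _) f)

theorem mul_dyadicOuterMeasure_iUnion_largeAverage_triple_le (hδ : 0 < δ) {f : En n → ℝ≥0∞}
    (hf : choquet (dyadicOuterMeasure n hδ) f ≠ ⊤) {b : ℝ≥0∞} (hb : b ≠ 0) :
    b * dyadicOuterMeasure n hδ (⋃ Q : largeAverage hδ f b, Q.1.triple) ≤
      9 ^ n * 3 ^ (n + 1) * choquet (dyadicOuterMeasure n hδ) f := by
  obtain ⟨K, hK⟩ := exists_scale_le_of_mem_largeAverage hδ hf hb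
  obtain ⟨S, hSF, hS, hheavy⟩ := exists_isPacking_forall_exists_le_massBelow hδ
    {Q | Maximal (· ∈ largeAverage hδ f b) Q}
  have htotal : b * ∑' Q : S, weight δ Q.1 ≤
      3 ^ (n + 1) * choquet (dyadicOuterMeasure n hδ) f :=
    hS.mul_tsum_weight_le hδ ((setOfPred_maximal_antichain _).subset hSF)
      fun Q hQ => (hSF hQ).prop.le
  have hfin : ∑' Q : S, weight δ Q.1 ≠ ⊤ := fun htop => by
    rw [htop, ENNReal.mul_top hb, top_le_iff] at htotal
    exact ENNReal.mul_ne_top (by finiteness) hf htotal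
  have hcover : ∀ Q ∈ largeAverage hδ f b, ∃ P ∈ {P | weight δ P ≤ massBelow δ S P}, Q ≤ P :=
    fun Q hQ =>
      have ⟨P, hQP, hP⟩ := exists_le_maximal hK hQ
      have ⟨P', hPP', hP'⟩ := hheavy P hP
      ⟨P', hP', hQP.trans hPP'⟩
  calc b * dyadicOuterMeasure n hδ (⋃ Q : largeAverage hδ f b, Q.1.triple)
      ≤ b * (9 ^ n * ∑' Q : S, weight δ Q.1) := by
        gcongr
        exact (measure_mono (iUnion_triple_subset_iUnion_triple hcover)).trans
          (dyadicOuterMeasure_iUnion_triple_heavy_le hδ hfin)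
    _ = 9 ^ n * (b * ∑' Q : S, weight δ Q.1) := by ring
    _ ≤ 9 ^ n * (3 ^ (n + 1) * choquet (dyadicOuterMeasure n hδ) f) := by gcongr
    _ = 9 ^ n * 3 ^ (n + 1) * choquet (dyadicOuterMeasure n hδ) f := by ring

lemma weight_containing_le_mul_ball (hδ : 0 < δ) (hδn : δ ≤ n) {j : ℤ} {r : ℝ} (hr : 2 ^ j < r) :
    weight δ (containing (j + 1) x) ≤ 2 ^ ((n + 1) * δ) * dyadicOuterMeasure n hδ (ball x r) :=
  calc weight δ (containing (j + 1) x)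
      = 2 ^ ((n + 1) * δ) * weight δ (containing (j - n) x) := by
        rw [weight_eq_rpow, weight_eq_rpow, ← ENNReal.rpow_add _ _ two_ne_zero ENNReal.ofNat_ne_top]
        simp only [containing]
        push_cast
        ring_nf
    _ ≤ 2 ^ ((n + 1) * δ) * dyadicOuterMeasure n hδ (ball x r) := by
        gcongr
        exact (weight_le_dyadicOuterMeasure_toSet hδ hδn _).trans
          (measure_mono (containing_subset_ball hr))

lemma exists_mem_largeAverage_mem_triple (hδ : 0 < δ) (hδn : δ ≤ n) {f : En n → ℝ≥0∞} {b : ℝ≥0∞}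
    {r : ℝ} (hr : 0 < r)
    (h : b * (3 ^ n * 2 ^ ((n + 1) * δ)) * dyadicOuterMeasure n hδ (ball x r) <
      choquet (OuterMeasure.restrict (ball x r) (dyadicOuterMeasure n hδ)) f) :
    ∃ Q ∈ largeAverage hδ f b, x ∈ Q.triple := by
  obtain ⟨j, hjr, hrj⟩ := exists_mem_Ioc_zpow hr one_lt_two
  have mem_triple : ∀ P ∈ (containing (j + 1) x).neighbors, x ∈ P.triple := fun P hP => by
    rw [mem_triple_iff, (mem_neighbors.1 hP).1]
    exact mem_neighbors_comm.1 hP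
  by_contra! hsmall
  refine h.not_ge ?_
  calc choquet (OuterMeasure.restrict (ball x r) (dyadicOuterMeasure n hδ)) f
      ≤ choquet (OuterMeasure.restrict (containing (j + 1) x).triple
          (dyadicOuterMeasure n hδ)) f := choquet_restrict_mono _ f (ball_subset_triple hrj)
    _ ≤ ∑' P : (containing (j + 1) x).neighbors,
          choquet (OuterMeasure.restrict P.1.toSet (dyadicOuterMeasure n hδ)) f :=
        choquet_restrict_iUnion_le _ f _
    _ ≤ ∑' P : (containing (j + 1) x).neighbors, b * weight δ P.1 :=
        ENNReal.tsum_le_tsum fun P =>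
          not_lt.1 fun hP => hsmall P.1 hP (mem_triple P.1 P.2)
    _ = b * (3 ^ n * weight δ (containing (j + 1) x)) := by
        rw [ENNReal.tsum_mul_left, sum_neighbors_weight]
    _ ≤ b * (3 ^ n * (2 ^ ((n + 1) * δ) * dyadicOuterMeasure n hδ (ball x r))) := by
        gcongr
        exact weight_containing_le_mul_ball hδ hδn hjr
    _ = b * (3 ^ n * 2 ^ ((n + 1) * δ)) * dyadicOuterMeasure n hδ (ball x r) := by ring

lemma exists_mul_dyadicContent_ball_lt_of_lt_maximal {f : En n → ℝ≥0∞} {s : ℝ≥0∞}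
    (h : s < maximal n δ f x) :
    ∃ r > 0, s * dyadicContent n δ (ball x r) < choquetIntegral n δ (ball x r) f := by
  simp only [maximal, lt_iSup_iff] at h
  obtain ⟨r, hr, hlt⟩ := h
  exact ⟨r, hr, ENNReal.mul_lt_of_lt_div hlt⟩

theorem maximal_weak_type (hδ : 0 < δ) (hδn : δ ≤ n) (f : En n → ℝ≥0∞) (s : ℝ≥0∞) :
    s * dyadicContent n δ {x | s < maximal n δ f x} ≤
      3 ^ (4 * n + 1) * 2 ^ ((n + 1) * δ) * choquetIntegral n δ univ f := by
  simp only [choquetIntegral_eq_choquet hδ, OuterMeasure.restrict_univ]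
  have htwo : (2 : ℝ≥0∞) ^ ((n + 1) * δ) ≠ 0 := (ENNReal.rpow_pos two_pos ENNReal.ofNat_ne_top).ne'
  have hκ : (3 ^ n * 2 ^ ((n + 1) * δ) : ℝ≥0∞) ≠ 0 := mul_ne_zero (by positivity) htwo
  have hκ' : (3 ^ n * 2 ^ ((n + 1) * δ) : ℝ≥0∞) ≠ ⊤ := by finiteness
  rcases eq_or_ne s 0 with rfl | hs
  · simp
  rcases eq_or_ne (choquet (dyadicOuterMeasure n hδ) f) ⊤ with hf | hf
  · rw [hf, ENNReal.mul_top (mul_ne_zero (by positivity) htwo)]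
    exact le_top
  set b : ℝ≥0∞ := s / (3 ^ n * 2 ^ ((n + 1) * δ))
  have hb : b * (3 ^ n * 2 ^ ((n + 1) * δ)) = s := ENNReal.div_mul_cancel hκ hκ'
  have hcover : {x | s < maximal n δ f x} ⊆ ⋃ Q : largeAverage hδ f b, Q.1.triple := fun x hx => by
    obtain ⟨r, hr, hlt⟩ := exists_mul_dyadicContent_ball_lt_of_lt_maximal hx
    rw [choquetIntegral_eq_choquet hδ, ← hb] at hlt
    obtain ⟨Q, hQ, hxQ⟩ := exists_mem_largeAverage_mem_triple hδ hδn hr hlt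
    exact mem_iUnion.2 ⟨⟨Q, hQ⟩, hxQ⟩
  calc s * dyadicOuterMeasure n hδ {x | s < maximal n δ f x}
      ≤ 3 ^ n * 2 ^ ((n + 1) * δ) *
          (b * dyadicOuterMeasure n hδ (⋃ Q : largeAverage hδ f b, Q.1.triple)) := by
        rw [← mul_assoc, mul_comm _ b, hb]
        gcongr
    _ ≤ 3 ^ n * 2 ^ ((n + 1) * δ) *
          (9 ^ n * 3 ^ (n + 1) * choquet (dyadicOuterMeasure n hδ) f) := by
        refine mul_le_mul_right ?_ _
        exact mul_dyadicOuterMeasure_iUnion_largeAverage_triple_le hδ hf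
          (ENNReal.div_ne_zero.2 ⟨hs, hκ'⟩)
    _ = 3 ^ (4 * n + 1) * 2 ^ ((n + 1) * δ) * choquet (dyadicOuterMeasure n hδ) f := by
        rw [show (9 : ℝ≥0∞) ^ n = 3 ^ (2 * n) by rw [pow_mul]; norm_num]
        ring

lemma lebDev_le_maximal_add (hδ : 0 < δ) (f : En n → ℝ) (x : En n) :
    lebDev n δ f x ≤
      maximal n δ (fun y => ENNReal.ofReal |f y|) x + ENNReal.ofReal |f x| := by
  refine limsup_le_of_le (h := eventually_mem_nhdsWithin.mono fun r (hr : 0 < r) => ?_)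
  have abs_sub_le (y : En n) : ENNReal.ofReal |f y - f x| ≤
      ENNReal.ofReal |f y| + ENNReal.ofReal |f x| :=
    (ENNReal.ofReal_le_ofReal (abs_sub _ _)).trans ENNReal.ofReal_add_le
  have hdev : choquetIntegralAbs n δ (ball x r) (fun y => f y - f x) ≤
      choquetIntegralAbs n δ (ball x r) f +
        ENNReal.ofReal |f x| * dyadicContent n δ (ball x r) := by
    simp only [choquetIntegralAbs, choquetIntegral_eq_choquet hδ]
    refine (choquet_le_add_mul_measure_univ _ (abs_nonneg (f x)) abs_sub_le).trans_eq ?_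
    rw [OuterMeasure.restrict_apply, univ_inter]
    rfl
  calc choquetIntegralAbs n δ (ball x r) (fun y => f y - f x) /
        dyadicContent n δ (ball x r)
      ≤ (choquetIntegralAbs n δ (ball x r) f +
          ENNReal.ofReal |f x| * dyadicContent n δ (ball x r)) / dyadicContent n δ (ball x r) := by
        gcongr
    _ = ballAvg n δ (fun y => ENNReal.ofReal |f y|) x r +
          ENNReal.ofReal |f x| * (dyadicContent n δ (ball x r) / dyadicContent n δ (ball x r)) := by
        rw [ENNReal.add_div, mul_div_assoc, ballAvg, choquetIntegralAbs]
    _ ≤ maximal n δ (fun y => ENNReal.ofReal |f y|) x + ENNReal.ofReal |f x| := by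
        gcongr
        · exact le_iSup₂ (f := fun r (_ : 0 < r) => ballAvg n δ _ x r) r hr
        · exact mul_le_of_le_one_right' ENNReal.div_self_le_one

theorem mul_dyadicContent_lebDev_le (hδ : 0 < δ) (hδn : δ ≤ n) (f : En n → ℝ) (s : ℝ) :
    ENNReal.ofReal s * dyadicContent n δ {x | 2 * ENNReal.ofReal s < lebDev n δ f x} ≤
      (1 + 3 ^ (4 * n + 1) * 2 ^ ((n + 1) * δ)) * choquetIntegralAbs n δ univ f := by
  set g : En n → ℝ≥0∞ := fun x => ENNReal.ofReal |f x|
  have hsub : {x | 2 * ENNReal.ofReal s < lebDev n δ f x} ⊆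
      {x | ENNReal.ofReal s < g x} ∪ {x | ENNReal.ofReal s < maximal n δ g x} := fun x hx => by
    by_contra! hx'
    rw [mem_union, not_or] at hx'
    refine (hx.trans_le (lebDev_le_maximal_add hδ f x)).not_ge ?_
    rw [two_mul]
    exact add_le_add (not_lt.1 hx'.2) (not_lt.1 hx'.1)
  have chebyshev : ENNReal.ofReal s * dyadicContent n δ {x | ENNReal.ofReal s < g x} ≤
      choquetIntegral n δ univ g := by
    rw [choquetIntegral_eq_choquet hδ, OuterMeasure.restrict_univ]
    exact mul_measure_superlevel_le_choquet (dyadicOuterMeasure n hδ) g s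
  calc ENNReal.ofReal s * dyadicContent n δ {x | 2 * ENNReal.ofReal s < lebDev n δ f x}
      ≤ ENNReal.ofReal s * (dyadicContent n δ {x | ENNReal.ofReal s < g x} +
          dyadicContent n δ {x | ENNReal.ofReal s < maximal n δ g x}) := by
        gcongr
        exact (measure_mono hsub).trans (measure_union_le (μ := dyadicOuterMeasure n hδ) _ _)
    _ ≤ choquetIntegral n δ univ g +
          3 ^ (4 * n + 1) * 2 ^ ((n + 1) * δ) * choquetIntegral n δ univ g := by
        rw [mul_add]
        exact add_le_add chebyshev (maximal_weak_type hδ hδn g _)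
    _ = (1 + 3 ^ (4 * n + 1) * 2 ^ ((n + 1) * δ)) * choquetIntegralAbs n δ univ f := by
        rw [one_add_mul, choquetIntegralAbs]

end Content

/-- weak-type estimate for `f ↦ f^δ_*` on `nL¹(ℝⁿ, H̃^δ_∞)`. -/
theorem lebDev_weak_type (n : ℕ) (hn : 1 ≤ n) (δ : ℝ) (hδ0 : 0 < δ) (hδn : δ ≤ n) :
    ∃ c : ℝ, 0 < c ∧ ∀ f : En n → ℝ, choquetIntegralAbs n δ univ f < ⊤ →
      ∀ lam : ℝ, 0 < lam →
        dyadicContent n δ {x | ENNReal.ofReal lam < lebDev n δ f x} ≤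
          ENNReal.ofReal (c / lam) * choquetIntegralAbs n δ univ f := by
  set C : ℝ≥0∞ := 1 + 3 ^ (4 * n + 1) * 2 ^ ((n + 1) * δ)
  have hC : C ≠ ⊤ := by finiteness
  have hC0 : C ≠ 0 := by positivity
  refine ⟨2 * C.toReal, mul_pos two_pos (ENNReal.toReal_pos hC0 hC), fun f _ lam hlam => ?_⟩
  have hhalf : 0 < lam / 2 := half_pos hlam
  have hlam' : 2 * ENNReal.ofReal (lam / 2) = ENNReal.ofReal lam := by
    rw [← ENNReal.ofReal_ofNat, ← ENNReal.ofReal_mul zero_le_two, mul_div_cancel₀ _ two_ne_zero]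
  have hc : ENNReal.ofReal (2 * C.toReal / lam) = (ENNReal.ofReal (lam / 2))⁻¹ * C := by
    rw [show 2 * C.toReal / lam = (lam / 2)⁻¹ * C.toReal by field_simp,
      ENNReal.ofReal_mul (inv_nonneg.2 hhalf.le), ENNReal.ofReal_inv_of_pos hhalf,
      ENNReal.ofReal_toReal hC]
  rw [hc, mul_assoc, ← ENNReal.mul_le_iff_le_inv (by positivity) ENNReal.ofReal_ne_top, ← hlam']
  exact mul_dyadicContent_lebDev_le hδ0 hδn f (lam / 2)
end
end
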